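/- arXiv:2511.13537 — 3 statements merged into one kernel-verified Lean document; each statement's English description precedes it below -/
import Mathlib

section
/- Let f ∈ ℂ[X₀, …, Xₙ] be a nonzero homogeneous polynomial of degree d − n − 1 satisfying f ∈ I_v^{ord_P(L_v)} for every nonzero v ∈ ℝ^{n+1}. Then for every index i ∈ {1, …, d} the linear form ℓᵢ does not divide f; equivalently, f does not vanish identically on any facet hyperplane of P. -/
open MvPolynomial Finset Classical

noncomputable section

/-- The homogenization embedding `y ↦ (1, y₁, …, yₙ)`. -/
def lift1 {n : ℕ} (y : Fin n → ℝ) : Fin (n + 1) → ℝ := Fin.cons 1 y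

/-- The polytope `P = {y ∈ ℝⁿ | ℓᵢ(1,y) ≥ 0 for all i}`. -/
def polytopeOf {n d : ℕ} (ℓ : Fin d → MvPolynomial (Fin (n + 1)) ℝ) : Set (Fin n → ℝ) :=
  {y | ∀ i, 0 ≤ eval (lift1 y) (ℓ i)}

/-- The facet `Fᵢ = {y ∈ P | ℓᵢ(1,y) = 0}`. -/
def facetOf {n d : ℕ} (ℓ : Fin d → MvPolynomial (Fin (n + 1)) ℝ) (i : Fin d) :
    Set (Fin n → ℝ) :=
  {y ∈ polytopeOf ℓ | eval (lift1 y) (ℓ i) = 0}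

/-- The flat `F_v = {i | ℓᵢ(v) = 0}` of all facet hyperplanes through `v`. -/
def flatOf {n d : ℕ} (ℓ : Fin d → MvPolynomial (Fin (n + 1)) ℝ) (v : Fin (n + 1) → ℝ) :
    Finset (Fin d) :=
  Finset.univ.filter fun i => eval v (ℓ i) = 0

/-- The rank `r_v`: the dimension of the linear span of `{ℓᵢ : i ∈ F_v}`. -/
def rkOf {n d : ℕ} (ℓ : Fin d → MvPolynomial (Fin (n + 1)) ℝ) (v : Fin (n + 1) → ℝ) : ℕ :=
  Module.finrank ℝ (Submodule.span ℝ (ℓ '' (flatOf ℓ v : Set (Fin d))))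

/-- The nullity `nl_v = |F_v| − r_v`. -/
def nlOf {n d : ℕ} (ℓ : Fin d → MvPolynomial (Fin (n + 1)) ℝ) (v : Fin (n + 1) → ℝ) : ℕ :=
  (flatOf ℓ v).card - rkOf ℓ v

/-- The set `P_v = {y ∈ P | ℓᵢ(1,y) = 0 for all i ∈ F_v}`. -/
def faceOf {n d : ℕ} (ℓ : Fin d → MvPolynomial (Fin (n + 1)) ℝ) (v : Fin (n + 1) → ℝ) :
    Set (Fin n → ℝ) :=
  {y ∈ polytopeOf ℓ | ∀ i ∈ flatOf ℓ v, eval (lift1 y) (ℓ i) = 0}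

/-- The order `ord_P(L_v)`: equal to `nl_v` if `P_v` is nonempty with affine span of
dimension `n − r_v`, and to `nl_v + 1` otherwise. -/
def ordOf {n d : ℕ} (ℓ : Fin d → MvPolynomial (Fin (n + 1)) ℝ) (v : Fin (n + 1) → ℝ) : ℕ :=
  if (faceOf ℓ v).Nonempty ∧
      Module.finrank ℝ (affineSpan ℝ (faceOf ℓ v)).direction = n - rkOf ℓ v
  then nlOf ℓ v
  else nlOf ℓ v + 1

/-- The ideal `I_v ⊆ ℂ[X₀,…,Xₙ]` generated by all homogeneous degree-1 polynomials
vanishing at the real point `v`. -/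
def pointIdealC {n : ℕ} (v : Fin (n + 1) → ℝ) : Ideal (MvPolynomial (Fin (n + 1)) ℂ) :=
  Ideal.span {p | p.IsHomogeneous 1 ∧ eval (fun i => (v i : ℂ)) p = 0}

/-- The ideal `I_v ⊆ ℝ[X₀,…,Xₙ]` generated by all homogeneous degree-1 polynomials
vanishing at `v`. -/
def pointIdealR {n : ℕ} (v : Fin (n + 1) → ℝ) : Ideal (MvPolynomial (Fin (n + 1)) ℝ) :=
  Ideal.span {p | p.IsHomogeneous 1 ∧ eval v p = 0}

/-- Complexification of a real polynomial. -/
def toC {n : ℕ} (p : MvPolynomial (Fin (n + 1)) ℝ) : MvPolynomial (Fin (n + 1)) ℂ :=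
  map (algebraMap ℝ ℂ) p

/-- The hypotheses on the facet equations `ℓ₁, …, ℓ_d` of a full-dimensional compact convex
polytope `P ⊆ ℝⁿ`: the `ℓᵢ` are pairwise non-proportional homogeneous degree-1 polynomials,
`P` is compact with affine span all of `ℝⁿ`, and each facet `Fᵢ` is nonempty with affine
span of dimension `n − 1`. -/
structure IsPolytopeSetup {n d : ℕ} (ℓ : Fin d → MvPolynomial (Fin (n + 1)) ℝ) : Prop where
  hn : 1 ≤ n
  hd : n + 1 ≤ d
  hhom : ∀ i, (ℓ i).IsHomogeneous 1
  hne : ∀ i, ℓ i ≠ 0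
  hprop : ∀ i j, i ≠ j → ∀ c : ℝ, c • ℓ i ≠ ℓ j
  hcpt : IsCompact (polytopeOf ℓ)
  hfull : affineSpan ℝ (polytopeOf ℓ) = ⊤
  hfacet_ne : ∀ i, (facetOf ℓ i).Nonempty
  hfacet : ∀ i, Module.finrank ℝ (affineSpan ℝ (facetOf ℓ i)).direction = n - 1

/-!
Write `m a` for the number of forms proportional to `l a`, a number that is `1` for the facet
equations of a polytope but grows under restriction to a hyperplane. Call `l a` full in `f` if
`l a ^ m a ∣ f`. At a generic point of its hyperplane the adjoint conditions ask for order
`m a - 1` if `l a` cuts out a facet and for order `m a` otherwise, so `l a ^ (m a - 1)` always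
divides `f`, and forms that do not cut out facets are full.

By induction on the dimension, an `f` of small degree with one full facet form `l a` is zero. If all
forms were full, then `∏ i, l i` would divide `f`, which is impossible for degree reasons. Otherwise
some facet with a full form meets some facet with a non-full form in a ridge, because the boundary
of the cone is connected in codimension one. Let `a` be full and `c` not full there, and write
`f = l c ^ (m c - 1) * g`. The restriction of `g` to the hyperplane of `c` satisfies the adjoint
conditions of the restricted arrangement, in which the ridge is a facet. Any further hyperplane
through the ridge is not a facet hyperplane, hence full, so the form of the ridge is full in this
restriction. By induction `g` vanishes on the hyperplane of `c`, and `c` is full after all.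
-/

namespace FormArrangement

section LinearForms

variable {𝕜 V : Type*} [Field 𝕜] [AddCommGroup V] [Module 𝕜 V]

lemma exists_eq_smul_of_ker_le {l l' : Module.Dual 𝕜 V}
    (h : LinearMap.ker l ≤ LinearMap.ker l') : ∃ c : 𝕜, l' = c • l := by
  have hspan := mem_span_of_iInf_ker_le_ker (L := fun _ : Unit => l) (by simpa using h)
  rw [Set.range_const, Submodule.mem_span_singleton] at hspan
  exact hspan.imp fun _ => Eq.symm

lemma ker_eq_of_ker_le {l l' : Module.Dual 𝕜 V} (hl' : l' ≠ 0)
    (h : LinearMap.ker l ≤ LinearMap.ker l') : LinearMap.ker l = LinearMap.ker l' := by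
  obtain ⟨c, rfl⟩ := exists_eq_smul_of_ker_le h
  exact (LinearMap.ker_smul l c (left_ne_zero_of_smul hl')).symm

lemma exists_endomorphism_range_eq (p : Submodule 𝕜 V) :
    ∃ π : V →ₗ[𝕜] V, LinearMap.range π = p := by
  obtain ⟨g, hg⟩ := p.subtype.exists_leftInverse_of_injective p.ker_subtype
  have hsurj : Function.Surjective g := fun x => ⟨x, LinearMap.congr_fun hg x⟩
  refine ⟨p.subtype ∘ₗ g, ?_⟩
  rw [LinearMap.range_comp_of_range_eq_top _ (LinearMap.range_eq_top.2 hsurj), p.range_subtype]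

lemma ker_comp_le_ker_comp_iff {W : Type*} [AddCommGroup W] [Module 𝕜 W] {φ : W →ₗ[𝕜] V}
    {m : Module.Dual 𝕜 V} (hφ : LinearMap.range φ = LinearMap.ker m) {l l' : Module.Dual 𝕜 V} :
    LinearMap.ker (l ∘ₗ φ) ≤ LinearMap.ker (l' ∘ₗ φ) ↔
      LinearMap.ker l ⊓ LinearMap.ker m ≤ LinearMap.ker l' := by
  rw [LinearMap.ker_comp, LinearMap.ker_comp, ← Submodule.map_le_iff_le_comap,
    Submodule.map_comap_eq, hφ, inf_comm]

lemma exists_injective_range_eq_ker {N : ℕ} {l : Module.Dual 𝕜 (Fin (N + 1) → 𝕜)} (hl : l ≠ 0) :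
    ∃ φ : (Fin N → 𝕜) →ₗ[𝕜] (Fin (N + 1) → 𝕜),
      Function.Injective φ ∧ LinearMap.range φ = LinearMap.ker l := by
  have hdim := Module.Dual.finrank_ker_add_one_of_ne_zero hl
  rw [Module.finrank_fin_fun, add_left_inj] at hdim
  obtain ⟨e⟩ : Nonempty ((Fin N → 𝕜) ≃ₗ[𝕜] LinearMap.ker l) :=
    FiniteDimensional.nonempty_linearEquiv_of_finrank_eq (by rw [Module.finrank_fin_fun, hdim])
  refine ⟨(LinearMap.ker l).subtype ∘ₗ e, Subtype.val_injective.comp e.injective, ?_⟩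
  rw [LinearMap.range_comp_of_range_eq_top _ e.range, Submodule.range_subtype]

end LinearForms

section LinearPolynomials

variable {𝕜 K σ τ : Type*} [Field 𝕜] [Field K] [Algebra 𝕜 K]

/-- Evaluation of a polynomial over `K` at a `𝕜`-rational point. -/
def evalBase (v : σ → 𝕜) : MvPolynomial σ K →ₐ[K] K :=
  aeval fun k => algebraMap 𝕜 K (v k)

lemma ext_evalBase [Infinite 𝕜] {f g : MvPolynomial σ K}
    (h : ∀ v : σ → 𝕜, evalBase v f = evalBase v g) : f = g := by
  refine MvPolynomial.funext_set (fun _ => Set.range (algebraMap 𝕜 K))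
    (fun _ => Set.infinite_range_of_injective (algebraMap 𝕜 K).injective) fun x hx => ?_
  choose v hv using fun k => hx k (Set.mem_univ k)
  obtain rfl : (fun k => algebraMap 𝕜 K (v k)) = x := _root_.funext hv
  exact h v

variable [Fintype σ]

variable (K) in
/-- The linear form `l` on `𝕜^σ`, seen as a polynomial with coefficients in an extension `K`
of `𝕜`. -/
def linPoly : Module.Dual 𝕜 (σ → 𝕜) →ₗ[𝕜] MvPolynomial σ K :=
  ∑ k, (LinearMap.applyₗ (Pi.single k 1)).smulRight (X k)

lemma linPoly_apply (l : Module.Dual 𝕜 (σ → 𝕜)) :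
    linPoly K l = ∑ k, C (algebraMap 𝕜 K (l (Pi.single k 1))) * X k := by
  simp [linPoly, ← MvPolynomial.smul_eq_C_mul]

lemma isHomogeneous_linPoly (l : Module.Dual 𝕜 (σ → 𝕜)) : (linPoly K l).IsHomogeneous 1 := by
  rw [linPoly_apply]
  exact IsHomogeneous.sum _ _ _ fun _ _ => isHomogeneous_C_mul_X _ _

lemma exists_linPoly_eq {p : MvPolynomial σ 𝕜} (hp : p.IsHomogeneous 1) :
    ∃ l : Module.Dual 𝕜 (σ → 𝕜), linPoly 𝕜 l = p := by
  rw [← mem_homogeneousSubmodule, homogeneousSubmodule_one_eq_span_X,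
    Submodule.mem_span_range_iff_exists_fun] at hp
  obtain ⟨c, rfl⟩ := hp
  refine ⟨∑ k, c k • LinearMap.proj k, ?_⟩
  simp [linPoly_apply, Pi.single_apply, MvPolynomial.smul_eq_C_mul]

@[simp]
lemma evalBase_linPoly (l : Module.Dual 𝕜 (σ → 𝕜)) (v : σ → 𝕜) :
    evalBase v (linPoly K l) = algebraMap 𝕜 K (l v) := by
  have hsum : l v = ∑ k, l (Pi.single k 1) * v k := by
    conv_lhs => rw [← (Pi.basisFun 𝕜 σ).sum_repr v, map_sum]
    simp [mul_comm]
  simp [hsum, linPoly_apply, evalBase]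

lemma eval_linPoly (l : Module.Dual 𝕜 (σ → 𝕜)) (v : σ → 𝕜) : eval v (linPoly 𝕜 l) = l v :=
  evalBase_linPoly l v

lemma linPoly_injective : Function.Injective (linPoly K : Module.Dual 𝕜 (σ → 𝕜) →ₗ[𝕜] _) := by
  intro l l' h
  refine LinearMap.ext fun v => (algebraMap 𝕜 K).injective ?_
  rw [← evalBase_linPoly, ← evalBase_linPoly, h]

lemma linPoly_ne_zero {l : Module.Dual 𝕜 (σ → 𝕜)} (hl : l ≠ 0) : linPoly K l ≠ 0 :=
  (map_ne_zero_iff _ linPoly_injective).2 hl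

lemma totalDegree_linPoly_pow {l : Module.Dual 𝕜 (σ → 𝕜)} (hl : l ≠ 0) (m : ℕ) :
    (linPoly K l ^ m).totalDegree = m := by
  rw [((isHomogeneous_linPoly l).pow m).totalDegree (pow_ne_zero m (linPoly_ne_zero hl)), one_mul]

lemma totalDegree_prod_linPoly {ι : Type*} (s : Finset ι) {l : ι → Module.Dual 𝕜 (σ → 𝕜)}
    (hl : ∀ i ∈ s, l i ≠ 0) : (∏ i ∈ s, linPoly K (l i)).totalDegree = #s := by
  have hhom := IsHomogeneous.prod s _ _ fun i _ => isHomogeneous_linPoly (K := K) (l i)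
  rw [hhom.totalDegree (prod_ne_zero_iff.2 fun i hi => linPoly_ne_zero (hl i hi)), sum_const,
    smul_eq_mul, mul_one]

/-- Pullback of polynomial functions along a linear map defined over `𝕜`. -/
def subst (φ : (σ → 𝕜) →ₗ[𝕜] (τ → 𝕜)) : MvPolynomial τ K →ₐ[K] MvPolynomial σ K :=
  aeval fun k => linPoly K (LinearMap.proj k ∘ₗ φ)

lemma subst_X (φ : (σ → 𝕜) →ₗ[𝕜] (τ → 𝕜)) (k : τ) :
    subst φ (X k : MvPolynomial τ K) = linPoly K (LinearMap.proj k ∘ₗ φ) :=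
  aeval_X _ _

@[simp]
lemma evalBase_subst (φ : (σ → 𝕜) →ₗ[𝕜] (τ → 𝕜)) (f : MvPolynomial τ K) (v : σ → 𝕜) :
    evalBase v (subst φ f) = evalBase (φ v) f := by
  have hcomp : (evalBase v).comp (subst φ) = evalBase (K := K) (φ v) := by
    ext k
    rw [AlgHom.comp_apply, subst_X, evalBase_linPoly]
    simp [evalBase]
  exact DFunLike.congr_fun hcomp f

lemma totalDegree_subst_le (φ : (σ → 𝕜) →ₗ[𝕜] (τ → 𝕜)) (f : MvPolynomial τ K) :
    (subst φ f).totalDegree ≤ f.totalDegree := by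
  rw [subst, aeval_def, eval₂_eq]
  refine totalDegree_finsetSum_le fun m hm => ?_
  have hmonomial : (∏ k ∈ m.support, linPoly K (LinearMap.proj k ∘ₗ φ) ^ m k).IsHomogeneous
      (∑ k ∈ m.support, 1 * m k) :=
    IsHomogeneous.prod _ _ _ fun k _ => (isHomogeneous_linPoly _).pow _
  calc _ ≤ ∑ k ∈ m.support, 1 * m k := (hmonomial.C_mul _).totalDegree_le
    _ = m.sum fun _ e => e := by simp only [one_mul, Finsupp.sum]
    _ ≤ f.totalDegree := le_totalDegree hm

variable [Fintype τ]

lemma subst_linPoly [Infinite 𝕜] (φ : (τ → 𝕜) →ₗ[𝕜] (σ → 𝕜)) (l : Module.Dual 𝕜 (σ → 𝕜)) :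
    subst φ (linPoly K l) = linPoly K (l ∘ₗ φ) :=
  ext_evalBase fun v : τ → 𝕜 => by simp

lemma linPoly_dvd_sub_subst [Infinite 𝕜] (l : Module.Dual 𝕜 (σ → 𝕜)) (z : σ → 𝕜)
    (f : MvPolynomial σ K) :
    linPoly K l ∣ f - subst (LinearMap.id - l.smulRight z) f := by
  rw [← Ideal.mem_span_singleton, ← Ideal.Quotient.mk_eq_mk_iff_sub_mem]
  set I := Ideal.span {linPoly K l}
  have hcomp : Ideal.Quotient.mkₐ K I =
      (Ideal.Quotient.mkₐ K I).comp (subst (LinearMap.id - l.smulRight z)) := by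
    ext k
    refine (Ideal.Quotient.mk_eq_mk_iff_sub_mem _ _).2 (Ideal.mem_span_singleton.2 ?_)
    refine ⟨C (algebraMap 𝕜 K (z k)), ext_evalBase fun v : σ → 𝕜 => ?_⟩
    rw [AlgHom.coe_toRingHom, map_sub, map_mul, evalBase_subst, evalBase_linPoly]
    simp [evalBase]
  exact DFunLike.congr_fun hcomp f

lemma linPoly_dvd_iff_forall_evalBase [Infinite 𝕜] {l : Module.Dual 𝕜 (σ → 𝕜)} (hl : l ≠ 0)
    {f : MvPolynomial σ K} :
    linPoly K l ∣ f ↔ ∀ v, l v = 0 → evalBase v f = 0 := by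
  constructor
  · rintro ⟨g, rfl⟩ v hv
    simp [hv]
  · intro hf
    obtain ⟨z, hz⟩ := LinearMap.surjective hl 1
    have hsubst : subst (LinearMap.id - l.smulRight z) f = 0 :=
      ext_evalBase fun v : σ → 𝕜 => by
        rw [evalBase_subst, map_zero]
        exact hf _ (by simp [hz])
    simpa only [hsubst, sub_zero] using linPoly_dvd_sub_subst l z f

lemma linPoly_dvd_iff_subst_eq_zero [Infinite 𝕜] {l : Module.Dual 𝕜 (σ → 𝕜)} (hl : l ≠ 0)
    {φ : (τ → 𝕜) →ₗ[𝕜] (σ → 𝕜)} (hφ : LinearMap.range φ = LinearMap.ker l)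
    {f : MvPolynomial σ K} : linPoly K l ∣ f ↔ subst φ f = 0 := by
  simp_rw [linPoly_dvd_iff_forall_evalBase hl, ← LinearMap.mem_ker, ← hφ, LinearMap.mem_range,
    forall_exists_index, forall_apply_eq_imp_iff, ← evalBase_subst]
  exact ⟨fun h => ext_evalBase fun v : τ → 𝕜 => by rw [h, map_zero], fun h v => by rw [h, map_zero]⟩

lemma prime_linPoly [Infinite 𝕜] {l : Module.Dual 𝕜 (σ → 𝕜)} (hl : l ≠ 0) :
    Prime (linPoly K l) := by
  obtain ⟨π, hπ⟩ := exists_endomorphism_range_eq (LinearMap.ker l)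
  refine ⟨linPoly_ne_zero hl, fun hunit => ?_, fun f g => ?_⟩
  · simpa using (linPoly_dvd_iff_subst_eq_zero hl hπ).1 (isUnit_iff_dvd_one.1 hunit)
  · simp only [linPoly_dvd_iff_subst_eq_zero hl hπ, map_mul, mul_eq_zero, imp_self]

lemma linPoly_dvd_linPoly_iff [Infinite 𝕜] {l l' : Module.Dual 𝕜 (σ → 𝕜)} (hl : l ≠ 0) :
    linPoly K l ∣ linPoly K l' ↔ LinearMap.ker l ≤ LinearMap.ker l' := by
  simp [linPoly_dvd_iff_forall_evalBase hl, SetLike.le_def]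

lemma associated_linPoly [Infinite 𝕜] {l l' : Module.Dual 𝕜 (σ → 𝕜)} (hl : l ≠ 0) (hl' : l' ≠ 0)
    (h : LinearMap.ker l = LinearMap.ker l') : Associated (linPoly K l) (linPoly K l') :=
  associated_of_dvd_dvd ((linPoly_dvd_linPoly_iff hl).2 h.le) ((linPoly_dvd_linPoly_iff hl').2 h.ge)

lemma associated_prod_linPoly [Infinite 𝕜] {ι : Type*} {l : ι → Module.Dual 𝕜 (σ → 𝕜)}
    (hl : ∀ i, l i ≠ 0) {a : ι} {I : Finset ι}
    (hI : ∀ i ∈ I, LinearMap.ker (l i) = LinearMap.ker (l a)) :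
    Associated (∏ i ∈ I, linPoly K (l i)) (linPoly K (l a) ^ #I) := by
  rw [← prod_const]
  exact Associated.prod I _ _ fun i hi => associated_linPoly (hl i) (hl a) (hI i hi)

lemma isRelPrime_linPoly [Infinite 𝕜] {l l' : Module.Dual 𝕜 (σ → 𝕜)} (hl : l ≠ 0) (hl' : l' ≠ 0)
    (h : LinearMap.ker l ≠ LinearMap.ker l') : IsRelPrime (linPoly K l) (linPoly K l') := by
  rw [(prime_linPoly hl).irreducible.isRelPrime_iff_not_dvd, linPoly_dvd_linPoly_iff hl]
  exact fun hle => h (ker_eq_of_ker_le hl' hle)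

lemma eq_zero_of_evalBase_eq_zero_off_hyperplanes [Infinite 𝕜] {ι : Type*} (s : Finset ι)
    {q : ι → Module.Dual 𝕜 (σ → 𝕜)} (hq : ∀ i ∈ s, q i ≠ 0) {f : MvPolynomial σ K}
    (hf : ∀ v, (∀ i ∈ s, q i v ≠ 0) → evalBase v f = 0) : f = 0 := by
  have hmul : (∏ i ∈ s, linPoly K (q i)) * f = 0 := ext_evalBase fun v : σ → 𝕜 => by
    by_cases hv : ∀ i ∈ s, q i v ≠ 0
    · simp [hf v hv]
    · push Not at hv
      obtain ⟨i, hi, hiv⟩ := hv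
      simp [prod_eq_zero hi, hiv]
  exact (mul_eq_zero.1 hmul).resolve_left
    (prod_ne_zero_iff.2 fun i hi => linPoly_ne_zero (hq i hi))

lemma linPoly_dvd_of_evalBase_eq_zero_off_hyperplanes [Infinite 𝕜] {ι : Type*} (s : Finset ι)
    {l : Module.Dual 𝕜 (σ → 𝕜)} (hl : l ≠ 0) {q : ι → Module.Dual 𝕜 (σ → 𝕜)}
    (hq : ∀ i ∈ s, ¬ LinearMap.ker l ≤ LinearMap.ker (q i)) {f : MvPolynomial σ K}
    (hf : ∀ v, l v = 0 → (∀ i ∈ s, q i v ≠ 0) → evalBase v f = 0) : linPoly K l ∣ f := by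
  obtain ⟨π, hπ⟩ := exists_endomorphism_range_eq (LinearMap.ker l)
  rw [linPoly_dvd_iff_subst_eq_zero hl hπ]
  refine eq_zero_of_evalBase_eq_zero_off_hyperplanes s (q := fun i => q i ∘ₗ π)
    (fun i hi hzero => hq i hi ?_) fun v hv => ?_
  · rw [← hπ, LinearMap.range_le_ker_iff, hzero]
  · rw [evalBase_subst]
    exact hf _ (LinearMap.mem_ker.1 (hπ ▸ LinearMap.mem_range_self π v)) hv

end LinearPolynomials

section VanishingOrder

variable {𝕜 K σ τ : Type*} [Field 𝕜] [Field K] [Algebra 𝕜 K]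

/-- The expansion of `f (v + t x)` as a polynomial in `t` whose coefficients are polynomials
in `x`. -/
def lineExpansion (v : σ → 𝕜) : MvPolynomial σ K →ₐ[K] Polynomial (MvPolynomial σ K) :=
  aeval fun k => Polynomial.C (C (algebraMap 𝕜 K (v k))) + Polynomial.X * Polynomial.C (X k)

/-- All terms of degree less than `k` in the Taylor expansion of `f` at `v` are zero. -/
def VanishesToOrder (v : σ → 𝕜) (k : ℕ) (f : MvPolynomial σ K) : Prop :=
  Polynomial.X ^ k ∣ lineExpansion v f

lemma lineExpansion_X (v : σ → 𝕜) (k : σ) : lineExpansion v (X k : MvPolynomial σ K) =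
    Polynomial.C (C (algebraMap 𝕜 K (v k))) + Polynomial.X * Polynomial.C (X k) :=
  aeval_X _ _

lemma constantCoeff_lineExpansion (v : σ → 𝕜) (f : MvPolynomial σ K) :
    Polynomial.constantCoeff (lineExpansion v f) = C (evalBase v f) := by
  have hcomp : Polynomial.constantCoeff.comp (lineExpansion v).toRingHom =
      (C : K →+* MvPolynomial σ K).comp (evalBase v).toRingHom := by
    refine MvPolynomial.ringHom_ext (fun r => ?_) fun k => ?_
    · simp [Polynomial.algebraMap_apply]
    · simp [lineExpansion_X, evalBase]
  exact RingHom.congr_fun hcomp f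

lemma lineExpansion_of_isHomogeneous_one (v : σ → 𝕜) {p : MvPolynomial σ K}
    (hp : p.IsHomogeneous 1) : lineExpansion v p =
      Polynomial.C (C (evalBase v p)) + Polynomial.X * Polynomial.C p := by
  rw [← mem_homogeneousSubmodule, homogeneousSubmodule_one_eq_span_X] at hp
  induction hp using Submodule.span_induction with
  | mem p hp =>
    obtain ⟨k, rfl⟩ := hp
    simp [lineExpansion_X, evalBase]
  | zero => simp
  | add p q _ _ hp hq => simp only [map_add, hp, hq]; ring
  | smul a p _ hp =>
    rw [map_smul, map_smul, hp]
    simp only [Algebra.smul_def, map_mul, MvPolynomial.algebraMap_eq, Polynomial.algebraMap_apply,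
      Algebra.algebraMap_self_apply]
    ring

lemma VanishesToOrder.mono {v : σ → 𝕜} {k m : ℕ} {f : MvPolynomial σ K}
    (hf : VanishesToOrder v m f) (hkm : k ≤ m) : VanishesToOrder v k f :=
  (pow_dvd_pow _ hkm).trans hf

lemma VanishesToOrder.evalBase_eq_zero {v : σ → 𝕜} {k : ℕ} {f : MvPolynomial σ K}
    (hf : VanishesToOrder v (k + 1) f) : evalBase v f = 0 := by
  have hX : Polynomial.X ∣ lineExpansion v f := (dvd_pow_self _ k.succ_ne_zero).trans hf
  rw [Polynomial.X_dvd_iff, ← Polynomial.constantCoeff_apply, constantCoeff_lineExpansion] at hX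
  exact C_eq_zero.1 hX

lemma vanishesToOrder_of_mem_pow {v : σ → 𝕜} {k : ℕ} {f : MvPolynomial σ K}
    (hf : f ∈ Ideal.span {p : MvPolynomial σ K | p.IsHomogeneous 1 ∧ evalBase v p = 0} ^ k) :
    VanishesToOrder v k f := by
  have hle : (Ideal.span {p : MvPolynomial σ K | p.IsHomogeneous 1 ∧ evalBase v p = 0}).map
      (lineExpansion v) ≤ Ideal.span {Polynomial.X} := by
    rw [Ideal.map_le_iff_le_comap, Ideal.span_le]
    rintro p ⟨hp, hpv⟩
    rw [SetLike.mem_coe, Ideal.mem_comap, Ideal.mem_span_singleton,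
      lineExpansion_of_isHomogeneous_one v hp, hpv]
    simp
  have hmem := Ideal.mem_map_of_mem (lineExpansion v) hf
  rw [Ideal.map_pow] at hmem
  replace hmem := Ideal.pow_right_mono hle k hmem
  rwa [Ideal.span_singleton_pow, Ideal.mem_span_singleton] at hmem

variable [Fintype σ]

lemma VanishesToOrder.of_linPoly_pow_mul {l : Module.Dual 𝕜 (σ → 𝕜)} (hl : l ≠ 0) {v : σ → 𝕜}
    (hv : l v = 0) {k m : ℕ} {f : MvPolynomial σ K}
    (hf : VanishesToOrder v (k + m) (linPoly K l ^ m * f)) : VanishesToOrder v k f := by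
  have hexp : lineExpansion v (linPoly K l) = Polynomial.X * Polynomial.C (linPoly K l) := by
    simp [lineExpansion_of_isHomogeneous_one v (isHomogeneous_linPoly l), hv]
  rw [VanishesToOrder, map_mul, map_pow, hexp, mul_pow, mul_assoc, pow_add, mul_comm (_ ^ k),
    mul_dvd_mul_iff_left (pow_ne_zero m Polynomial.X_ne_zero)] at hf
  refine Polynomial.prime_X.pow_dvd_of_dvd_mul_left k ?_ hf
  simp [Polynomial.X_dvd_iff, ← map_pow, linPoly_ne_zero hl]

lemma lineExpansion_subst (φ : (σ → 𝕜) →ₗ[𝕜] (τ → 𝕜)) (v : σ → 𝕜) (f : MvPolynomial τ K) :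
    lineExpansion v (subst φ f) =
      Polynomial.mapAlgHom (subst φ) (lineExpansion (φ v) f) := by
  have hcomp : (lineExpansion v).comp (subst φ) =
      (Polynomial.mapAlgHom (subst φ)).comp (lineExpansion (K := K) (φ v)) := by
    refine MvPolynomial.algHom_ext fun k => ?_
    simp [subst_X, lineExpansion_X, lineExpansion_of_isHomogeneous_one v (isHomogeneous_linPoly _),
      ← algebraMap_eq]
  exact AlgHom.congr_fun hcomp f

lemma VanishesToOrder.subst {φ : (σ → 𝕜) →ₗ[𝕜] (τ → 𝕜)} {v : σ → 𝕜} {k : ℕ}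
    {f : MvPolynomial τ K} (hf : VanishesToOrder (φ v) k f) :
    VanishesToOrder v k (subst φ f) := by
  rw [VanishesToOrder, lineExpansion_subst]
  simpa using map_dvd (Polynomial.mapAlgHom (FormArrangement.subst (K := K) φ)) hf

lemma linPoly_pow_dvd_of_vanishesToOrder_off_hyperplanes [Infinite 𝕜] {ι : Type*} (s : Finset ι)
    {l : Module.Dual 𝕜 (σ → 𝕜)} (hl : l ≠ 0) {q : ι → Module.Dual 𝕜 (σ → 𝕜)}
    (hq : ∀ i ∈ s, ¬ LinearMap.ker l ≤ LinearMap.ker (q i)) (m : ℕ) {f : MvPolynomial σ K}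
    (hf : ∀ v, l v = 0 → (∀ i ∈ s, q i v ≠ 0) → VanishesToOrder v m f) :
    linPoly K l ^ m ∣ f := by
  induction m generalizing f with
  | zero => simp
  | succ m ih =>
    obtain ⟨g, rfl⟩ := linPoly_dvd_of_evalBase_eq_zero_off_hyperplanes s hl hq
      fun v hv hvq => (hf v hv hvq).evalBase_eq_zero
    rw [pow_succ']
    refine mul_dvd_mul_left _ (ih fun v hv hvq => ?_)
    exact VanishesToOrder.of_linPoly_pow_mul (m := 1) hl hv (by simpa using hf v hv hvq)

end VanishingOrder

section Cones

variable {ι V : Type*} [AddCommGroup V] [Module ℝ V] {l : ι → Module.Dual ℝ V}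

/-- `l a = 0` supports a facet of the cone `{x | ∀ i, 0 ≤ l i x}`: some point of this hyperplane
lies strictly inside every half-space `0 ≤ l i x` bounded by another hyperplane. -/
def IsFacet (l : ι → Module.Dual ℝ V) (a : ι) : Prop :=
  ∃ w, l a w = 0 ∧ ∀ i, LinearMap.ker (l i) ≠ LinearMap.ker (l a) → 0 < l i w

/-- The inequalities indexed by `M` define the cone `{x | ∀ i, 0 ≤ l i x}`, and each of them is an
equality at a point where all the others are strict. -/
structure IsFacetSystem (l : ι → Module.Dual ℝ V) (M : Finset ι) : Prop where
  nonneg : ∀ x, (∀ i ∈ M, 0 ≤ l i x) → ∀ i, 0 ≤ l i x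
  exists_pos : ∀ j ∈ M, ∃ w, l j w = 0 ∧ ∀ i ∈ M, i ≠ j → 0 < l i w

/-- `b` lies in the cone cut out by `M`, on a hyperplane labelled by `S` and on one not labelled
by `S`. -/
structure MeetsBoth (l : ι → Module.Dual ℝ V) (M : Finset ι) (S : ι → Prop) (b : V) : Prop where
  nonneg : ∀ i ∈ M, 0 ≤ l i b
  exists_mem : ∃ a ∈ M, S a ∧ l a b = 0
  exists_notMem : ∃ c ∈ M, ¬ S c ∧ l c b = 0

/-- `l a` and `l c` define facets of the cone `{x | ∀ i, 0 ≤ l i x}`, and `b` lies in the relative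
interior of their common face, which has codimension two. -/
structure IsRidgePoint (l : ι → Module.Dual ℝ V) (a c : ι) (b : V) : Prop where
  isFacet_left : IsFacet l a
  isFacet_right : IsFacet l c
  apply_left : l a b = 0
  apply_right : l c b = 0
  nonneg : ∀ i, 0 ≤ l i b
  ker_inf_le : ∀ i, l i b = 0 → LinearMap.ker (l a) ⊓ LinearMap.ker (l c) ≤ LinearMap.ker (l i)

/-- The largest `s` for which `x - s • o` satisfies the inequalities indexed by `A`, where `o` is
a point at which they are strict. -/
def depth (l : ι → Module.Dual ℝ V) (o : V) {A : Finset ι} (hA : A.Nonempty) (x : V) : ℝ :=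
  A.inf' hA fun i => l i x / l i o

lemma exists_add_smul_pos (M : Finset ι) {b : V} (hb : ∀ i ∈ M, 0 < l i b) (y : V) :
    ∃ ε : ℝ, 0 < ε ∧ ∀ i ∈ M, 0 < l i (b + ε • y) := by
  have hnear : ∀ᶠ ε in nhdsWithin (0 : ℝ) (Set.Ioi 0), ∀ i ∈ M, 0 < l i (b + ε • y) := by
    refine (Finset.eventually_all M).2 fun i hi => ?_
    refine Filter.Eventually.filter_mono nhdsWithin_le_nhds ?_
    have hcont : Continuous fun ε : ℝ => l i (b + ε • y) := by
      simp only [map_add, map_smul]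
      fun_prop
    exact hcont.continuousAt.eventually_const_lt (by simpa using hb i hi)
  obtain ⟨ε, hpos, hε⟩ := (hnear.and self_mem_nhdsWithin).exists
  exact ⟨ε, hε, hpos⟩

lemma exists_add_smul_nonneg (M : Finset ι) {b y : V} (hb : ∀ i ∈ M, 0 ≤ l i b)
    (hy : ∀ i ∈ M, l i b = 0 → 0 ≤ l i y) :
    ∃ ε : ℝ, 0 < ε ∧ ∀ i ∈ M, 0 ≤ l i (b + ε • y) ∧ (0 < l i b → 0 < l i (b + ε • y)) := by
  obtain ⟨ε, hε, hpos⟩ := exists_add_smul_pos {i ∈ M | 0 < l i b} (l := l) (b := b) (by simp) y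
  simp only [mem_filter, and_imp] at hpos
  refine ⟨ε, hε, fun i hi => ⟨?_, hpos i hi⟩⟩
  rcases (hb i hi).lt_or_eq with hib | hib
  · exact (hpos i hi hib).le
  · simpa [← hib] using mul_nonneg hε.le (hy i hi hib.symm)

lemma exists_pos_of_ne_zero (M : Finset ι) {o : V} (ho : ∀ i ∈ M, 0 < l i o)
    {ψ : Module.Dual ℝ V} (hψ : ψ ≠ 0) : ∃ o', (∀ i ∈ M, 0 < l i o') ∧ ψ o' ≠ 0 := by
  by_cases hψo : ψ o = 0
  · obtain ⟨y, hy⟩ := DFunLike.ne_iff.1 hψ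
    obtain ⟨ε, hε, hpos⟩ := exists_add_smul_pos M ho y
    exact ⟨_, hpos, by simpa [hψo, hε.ne'] using hy⟩
  · exact ⟨o, ho, hψo⟩

lemma exists_isFacetSystem [Finite ι] {o : V} (ho : ∀ i, 0 < l i o) :
    ∃ M, IsFacetSystem l M := by
  cases nonempty_fintype ι
  obtain ⟨M, hM⟩ := exists_minimal_of_wellFoundedLT
    (fun M : Finset ι => ∀ x, (∀ i ∈ M, 0 ≤ l i x) → ∀ i, 0 ≤ l i x)
    ⟨univ, fun x hx i => hx i (mem_univ i)⟩
  refine ⟨M, hM.prop, fun j hj => ?_⟩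
  have hredundant : ¬ ∀ x, (∀ i ∈ M.erase j, 0 ≤ l i x) → ∀ i, 0 ≤ l i x :=
    fun h => notMem_erase j M (hM.le_of_le h (erase_subset j M) hj)
  push Not at hredundant
  obtain ⟨z, hz, k, hk⟩ := hredundant
  have hjz : l j z < 0 := by
    by_contra! hjz
    refine hk.not_ge (hM.prop z (fun i hi => ?_) k)
    rcases eq_or_ne i j with rfl | hij
    · exact hjz
    · exact hz i (mem_erase.2 ⟨hij, hi⟩)
  refine ⟨(-l j z) • o + l j o • z, ?_, fun i hi hij => ?_⟩
  · simp only [map_add, map_smul, smul_eq_mul]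
    ring
  · simp only [map_add, map_smul, smul_eq_mul]
    exact add_pos_of_pos_of_nonneg (mul_pos (neg_pos.2 hjz) (ho i))
      (mul_nonneg (ho j).le (hz i (mem_erase.2 ⟨hij, hi⟩)))

namespace IsFacetSystem

variable {M : Finset ι}

lemma exists_nonneg_pos (hM : IsFacetSystem l M) {j : ι} (hj : j ∈ M) :
    ∃ w, l j w = 0 ∧ (∀ i ∈ M, 0 ≤ l i w) ∧ ∀ i ∈ M, i ≠ j → 0 < l i w := by
  obtain ⟨w, hjw, hw⟩ := hM.exists_pos j hj
  refine ⟨w, hjw, fun i hi => ?_, hw⟩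
  rcases eq_or_ne i j with rfl | hij
  · exact hjw.ge
  · exact (hw i hi hij).le

lemma apply_eq_zero (hM : IsFacetSystem l M) {b y : V} (hb : ∀ i ∈ M, 0 ≤ l i b)
    (hy : ∀ i ∈ M, l i b = 0 → l i y = 0) {k : ι} (hk : l k b = 0) : l k y = 0 := by
  have hnonneg : ∀ z, (∀ i ∈ M, l i b = 0 → l i z = 0) → 0 ≤ l k z := fun z hz => by
    obtain ⟨ε, hε, hpos⟩ := exists_add_smul_nonneg M hb fun i hi hib => (hz i hi hib).ge
    have hcone := hM.nonneg (b + ε • z) (fun i hi => (hpos i hi).1) k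
    rw [map_add, hk, zero_add, map_smul, smul_eq_mul] at hcone
    exact nonneg_of_mul_nonneg_right hcone hε
  have hneg := hnonneg (-y) fun i hi hib => by rw [map_neg, hy i hi hib, neg_zero]
  rw [map_neg] at hneg
  exact le_antisymm (neg_nonneg.1 hneg) (hnonneg y hy)

lemma isFacet (hM : IsFacetSystem l M) (hl : ∀ i, l i ≠ 0) {j : ι} (hj : j ∈ M) :
    IsFacet l j := by
  obtain ⟨w, hjw, hnonneg, hpos⟩ := hM.exists_nonneg_pos hj
  refine ⟨w, hjw, fun k hk => (hM.nonneg w hnonneg k).lt_of_ne' fun hkw => hk ?_⟩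
  refine (ker_eq_of_ker_le (hl k) fun y hy => ?_).symm
  refine hM.apply_eq_zero hnonneg (fun i hi hiw => ?_) hkw
  obtain rfl : i = j := of_not_not fun hij => (hpos i hi hij).ne' hiw
  exact hy

lemma exists_ker_eq (hM : IsFacetSystem l M) {i : ι} (hli : l i ≠ 0) (hi : IsFacet l i) :
    ∃ j ∈ M, LinearMap.ker (l j) = LinearMap.ker (l i) := by
  obtain ⟨w, hiw, hw⟩ := hi
  by_contra! hne
  have hpos : ∀ j ∈ M, 0 < l j w := fun j hj => hw j (hne j hj)
  exact hli (LinearMap.ext fun y => hM.apply_eq_zero (fun j hj => (hpos j hj).le)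
    (fun j hj hjw => absurd hjw (hpos j hj).ne') hiw)

end IsFacetSystem

lemma le_depth_iff {o : V} {A : Finset ι} (hA : A.Nonempty) (ho : ∀ i ∈ A, 0 < l i o) {s : ℝ}
    {x : V} : s ≤ depth l o hA x ↔ ∀ i ∈ A, 0 ≤ l i (x - s • o) := by
  rw [depth, le_inf'_iff]
  refine forall₂_congr fun i hi => ?_
  rw [le_div_iff₀ (ho i hi), map_sub, map_smul, smul_eq_mul, sub_nonneg]

lemma exists_apply_sub_depth_smul_eq_zero {o : V} {A : Finset ι} (hA : A.Nonempty)
    (ho : ∀ i ∈ A, 0 < l i o) (x : V) : ∃ i ∈ A, l i (x - depth l o hA x • o) = 0 := by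
  obtain ⟨i, hi, heq⟩ := exists_mem_eq_inf' hA fun i => l i x / l i o
  refine ⟨i, hi, ?_⟩
  rw [depth, heq, map_sub, map_smul, smul_eq_mul, div_mul_cancel₀ _ (ho i hi).ne', sub_self]

lemma depth_nonpos {o : V} {A : Finset ι} (hA : A.Nonempty) {i : ι} (hi : i ∈ A) {x : V}
    (hx : l i x = 0) : depth l o hA x ≤ 0 :=
  (inf'_le _ hi).trans_eq (by rw [hx, zero_div])

lemma continuous_depth_segment (o : V) {A : Finset ι} (hA : A.Nonempty) (p q : V) :
    Continuous fun t : ℝ => depth l o hA ((1 - t) • p + t • q) :=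
  Continuous.finset_inf'_apply _ fun i _ => by
    simp only [map_add, map_smul]
    fun_prop

/-- Along the segment from `p` to `q`, the depths below the hyperplanes labelled by `S` and below
the others exchange their order, so they agree at some point; moving from there in the direction
`-o` reaches both families at the same time. -/
lemma exists_sub_smul_meetsBoth {M : Finset ι} {S : ι → Prop} {o p q : V}
    (ho : ∀ i ∈ M, 0 < l i o) (hp : ∀ i ∈ M, 0 ≤ l i p) (hq : ∀ i ∈ M, 0 ≤ l i q)
    (hpS : ∃ a ∈ M, S a ∧ l a p = 0) (hqS : ∃ c ∈ M, ¬ S c ∧ l c q = 0) :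
    ∃ t s : ℝ, MeetsBoth l M S ((1 - t) • p + t • q - s • o) := by
  obtain ⟨a, ha, hSa, hap⟩ := hpS
  obtain ⟨c, hc, hSc, hcq⟩ := hqS
  let A := {i ∈ M | S i}
  let B := {i ∈ M | ¬ S i}
  have haA : a ∈ A := mem_filter.2 ⟨ha, hSa⟩
  have hcB : c ∈ B := mem_filter.2 ⟨hc, hSc⟩
  have hA : A.Nonempty := ⟨a, haA⟩
  have hB : B.Nonempty := ⟨c, hcB⟩
  have hoA : ∀ i ∈ A, 0 < l i o := fun i hi => ho i (mem_filter.1 hi).1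
  have hoB : ∀ i ∈ B, 0 < l i o := fun i hi => ho i (mem_filter.1 hi).1
  have hstart : depth l o hA p ≤ depth l o hB p := (depth_nonpos hA haA hap).trans <|
    (le_depth_iff hB hoB).2 fun i hi => by simpa using hp i (mem_filter.1 hi).1
  have hend : depth l o hB q ≤ depth l o hA q := (depth_nonpos hB hcB hcq).trans <|
    (le_depth_iff hA hoA).2 fun i hi => by simpa using hq i (mem_filter.1 hi).1
  obtain ⟨t, -, ht⟩ := isPreconnected_Icc.intermediate_value₂
    (Set.left_mem_Icc.2 zero_le_one) (Set.right_mem_Icc.2 zero_le_one)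
    (continuous_depth_segment o hA p q).continuousOn
    (continuous_depth_segment o hB p q).continuousOn (by simpa using hstart) (by simpa using hend)
  refine ⟨t, depth l o hA ((1 - t) • p + t • q), fun i hi => ?_, ?_, ?_⟩
  · by_cases hSi : S i
    · exact (le_depth_iff hA hoA).1 le_rfl i (mem_filter.2 ⟨hi, hSi⟩)
    · exact (le_depth_iff hB hoB).1 ht.le i (mem_filter.2 ⟨hi, hSi⟩)
  · obtain ⟨i, hi, hzero⟩ := exists_apply_sub_depth_smul_eq_zero hA hoA ((1 - t) • p + t • q)
    exact ⟨i, (mem_filter.1 hi).1, (mem_filter.1 hi).2, hzero⟩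
  · obtain ⟨j, hj, hzero⟩ := exists_apply_sub_depth_smul_eq_zero hB hoB ((1 - t) • p + t • q)
    exact ⟨j, (mem_filter.1 hj).1, (mem_filter.1 hj).2, ht ▸ hzero⟩

lemma exists_meetsBoth_pos {M : Finset ι} {S : ι → Prop} {o p q y : V} {a c k : ι}
    (ho : ∀ i ∈ M, 0 < l i o) (ha : a ∈ M) (hc : c ∈ M) (hk : k ∈ M) (hSa : S a) (hSc : ¬ S c)
    (hap : l a p = 0) (hcp : 0 < l c p) (hp : ∀ i ∈ M, 0 ≤ l i p)
    (hcq : l c q = 0) (haq : 0 < l a q) (hq : ∀ i ∈ M, 0 ≤ l i q)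
    (hay : l a y = 0) (hcy : l c y = 0) (hky : l k y ≠ 0) :
    ∃ u, MeetsBoth l M S u ∧ ∃ m ∈ M, 0 < l m u := by
  -- `ψ` vanishes at `p` and `q` but not identically, so a suitable `o` lies off their plane.
  let ψ : Module.Dual ℝ V := l k - (l k p / l c p) • l c - (l k q / l a q) • l a
  have hψp : ψ p = 0 := by simp [ψ, hap, hcp.ne']
  have hψq : ψ q = 0 := by simp [ψ, hcq, haq.ne']
  have hψ : ψ ≠ 0 := fun h => hky (by simpa [ψ, hay, hcy] using LinearMap.congr_fun h y)
  obtain ⟨o, ho, hψo⟩ := exists_pos_of_ne_zero M ho hψ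
  obtain ⟨t, s, hu⟩ := exists_sub_smul_meetsBoth ho hp hq ⟨a, ha, hSa, hap⟩ ⟨c, hc, hSc, hcq⟩
  refine ⟨_, hu, ?_⟩
  by_contra! hnonpos
  have hzero : ∀ m ∈ M, l m ((1 - t) • p + t • q - s • o) = 0 := fun m hm =>
    le_antisymm (hnonpos m hm) (hu.nonneg m hm)
  have hs : s = 0 := by
    have hψu : ψ ((1 - t) • p + t • q - s • o) = 0 := by
      simp only [ψ, LinearMap.sub_apply, LinearMap.smul_apply, hzero k hk, hzero a ha, hzero c hc,
        smul_zero, sub_zero]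
    simpa [hψp, hψq, hψo] using hψu
  have ht : t = 0 := by simpa [hs, hap, haq.ne'] using hzero a ha
  simpa [hs, ht, hcp.ne'] using hzero c hc

lemma MeetsBoth.exists_fewer_zeros {M : Finset ι} (hM : IsFacetSystem l M) {S : ι → Prop} {o b : V}
    (ho : ∀ i ∈ M, 0 < l i o) (hb : MeetsBoth l M S b) {a c k : ι} (ha : a ∈ M) (hc : c ∈ M)
    (hk : k ∈ M) (hSa : S a) (hSc : ¬ S c) (hab : l a b = 0) (hcb : l c b = 0) (hkb : l k b = 0)
    (hker : ¬ LinearMap.ker (l a) ⊓ LinearMap.ker (l c) ≤ LinearMap.ker (l k)) :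
    ∃ b', MeetsBoth l M S b' ∧ #{i ∈ M | l i b' = 0} < #{i ∈ M | l i b = 0} := by
  have hac : a ≠ c := fun h => hSc (h ▸ hSa)
  obtain ⟨p, hap, hp, hpos⟩ := hM.exists_nonneg_pos ha
  obtain ⟨q, hcq, hq, hqos⟩ := hM.exists_nonneg_pos hc
  obtain ⟨y, ⟨hay, hcy⟩, hky⟩ := SetLike.not_le_iff_exists.1 hker
  obtain ⟨u, hu, m, hm, hmu⟩ := exists_meetsBoth_pos (M := {i ∈ M | l i b = 0}) (S := S)
    (fun i hi => ho i (mem_filter.1 hi).1) (mem_filter.2 ⟨ha, hab⟩) (mem_filter.2 ⟨hc, hcb⟩)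
    (mem_filter.2 ⟨hk, hkb⟩) hSa hSc hap (hpos c hc hac.symm) (fun i hi => hp i (mem_filter.1 hi).1)
    hcq (hqos a ha hac) (fun i hi => hq i (mem_filter.1 hi).1) hay hcy hky
  obtain ⟨ε, hε, hbu⟩ := exists_add_smul_nonneg M hb.nonneg
    fun i hi hib => hu.nonneg i (mem_filter.2 ⟨hi, hib⟩)
  have hface : ∀ {i}, l i b = 0 → l i (b + ε • u) = ε * l i u := fun {i} hib => by simp [hib]
  obtain ⟨i, hi, hSi, hiu⟩ := hu.exists_mem
  obtain ⟨j, hj, hSj, hju⟩ := hu.exists_notMem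
  rw [mem_filter] at hi hj hm
  refine ⟨b + ε • u, ⟨fun r hr => (hbu r hr).1, ⟨i, hi.1, hSi, by simp [hi.2, hiu]⟩,
    ⟨j, hj.1, hSj, by simp [hj.2, hju]⟩⟩, card_lt_card ?_⟩
  refine (ssubset_iff_of_subset fun r hr => ?_).2 ⟨m, mem_filter.2 hm, fun hm' => ?_⟩
  · rw [mem_filter] at hr ⊢
    refine ⟨hr.1, of_not_not fun hrb => ?_⟩
    exact ((hbu r hr.1).2 ((hb.nonneg r hr.1).lt_of_ne' hrb)).ne' hr.2
  · exact (mul_pos hε hmu).ne' (hface hm.2 ▸ (mem_filter.1 hm').2)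

/-- Starting from the apex, pass to points on fewer and fewer hyperplanes until only those through
a ridge are left. -/
lemma exists_isRidgePoint [Finite ι] (hl : ∀ i, l i ≠ 0) {o : V} (ho : ∀ i, 0 < l i o)
    {S : ι → Prop} (hS : ∀ {i j}, LinearMap.ker (l i) = LinearMap.ker (l j) → S i → S j)
    {a₀ c₀ : ι} (ha₀ : IsFacet l a₀) (hc₀ : IsFacet l c₀) (hSa₀ : S a₀) (hSc₀ : ¬ S c₀) :
    ∃ a c b, S a ∧ ¬ S c ∧ IsRidgePoint l a c b := by
  obtain ⟨M, hM⟩ := exists_isFacetSystem ho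
  obtain ⟨a₁, ha₁, ha₁₀⟩ := hM.exists_ker_eq (hl a₀) ha₀
  obtain ⟨c₁, hc₁, hc₁₀⟩ := hM.exists_ker_eq (hl c₀) hc₀
  have hzero : MeetsBoth l M S 0 := ⟨by simp, ⟨a₁, ha₁, hS ha₁₀.symm hSa₀, map_zero _⟩,
    ⟨c₁, hc₁, fun h => hSc₀ (hS hc₁₀ h), map_zero _⟩⟩
  obtain ⟨b, hb, hmin⟩ := exists_minimalFor_of_wellFoundedLT (MeetsBoth l M S)
    (fun b => #{i ∈ M | l i b = 0}) ⟨0, hzero⟩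
  obtain ⟨a, ha, hSa, hab⟩ := hb.exists_mem
  obtain ⟨c, hc, hSc, hcb⟩ := hb.exists_notMem
  refine ⟨a, c, b, hSa, hSc, hM.isFacet hl ha, hM.isFacet hl hc, hab, hcb,
    hM.nonneg b hb.nonneg, fun i hib y hy => hM.apply_eq_zero hb.nonneg (fun k hk hkb => ?_) hib⟩
  by_contra hky
  obtain ⟨b', hb', hlt⟩ := hb.exists_fewer_zeros hM (fun i _ => ho i) ha hc hk hSa hSc hab hcb hkb
    fun hle => hky (hle hy)
  exact hlt.not_ge (hmin hb' hlt.le)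

lemma IsFacet.exists_pos [Finite ι] {a : ι} (ha : IsFacet l a) (hla : l a ≠ 0)
    (hne : ∀ i, i ≠ a → LinearMap.ker (l i) ≠ LinearMap.ker (l a)) : ∃ o, ∀ i, 0 < l i o := by
  cases nonempty_fintype ι
  obtain ⟨w, haw, hw⟩ := ha
  obtain ⟨z, hz⟩ := LinearMap.surjective hla 1
  obtain ⟨ε, hε, hpos⟩ := exists_add_smul_pos (univ.erase a)
    (fun i hi => hw i (hne i (ne_of_mem_erase hi))) z
  refine ⟨w + ε • z, fun i => ?_⟩
  rcases eq_or_ne i a with rfl | hia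
  · simpa [haw, hz] using hε
  · exact hpos i (mem_erase.2 ⟨hia, mem_univ i⟩)

lemma IsFacet.ker_eq_or_ker_eq {a c i : ι} (ha : IsFacet l a) (hc : IsFacet l c)
    (hi : IsFacet l i) (hac : LinearMap.ker (l a) ≠ LinearMap.ker (l c))
    (hle : LinearMap.ker (l a) ⊓ LinearMap.ker (l c) ≤ LinearMap.ker (l i)) :
    LinearMap.ker (l i) = LinearMap.ker (l a) ∨ LinearMap.ker (l i) = LinearMap.ker (l c) := by
  by_contra! hne
  obtain ⟨p, hap, hp⟩ := ha
  obtain ⟨q, hcq, hq⟩ := hc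
  obtain ⟨r, hir, hr⟩ := hi
  have haq := hq a hac
  have hcp := hp c hac.symm
  have har := hr a hne.1.symm
  have hcr := hr c hne.2.symm
  have hip := hp i hne.1
  have hiq := hq i hne.2
  have hcombination : l i (r - (l a r / l a q) • q - (l c r / l c p) • p) = 0 :=
    hle ⟨by simp [hap, haq.ne'], by simp [hcq, hcp.ne']⟩
  simp only [map_sub, map_smul, smul_eq_mul, hir] at hcombination
  have hqpos : 0 < l a r / l a q * l i q := by positivity
  have hppos : 0 < l c r / l c p * l i p := by positivity
  linarith

end Cones

section Restriction

variable {ι V W : Type*} [AddCommGroup V] [Module ℝ V] [AddCommGroup W] [Module ℝ W]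

/-- The intersection of the hyperplanes through `v` is spanned by a face of the cone
`{x | ∀ i, 0 ≤ l i x}`, expressed by a point in the relative interior of that face. -/
def SpansFace (l : ι → Module.Dual ℝ V) (v : V) : Prop :=
  ∃ w, (∀ i, l i v = 0 → l i w = 0) ∧ ∀ i, l i v ≠ 0 → 0 < l i w

/-- The forms that do not define the hyperplane of `l c`, pulled back along `φ`; for `φ` an
isomorphism onto that hyperplane this is the restricted arrangement, with multiplicities. -/
def restrict (l : ι → Module.Dual ℝ V) (c : ι) (φ : W →ₗ[ℝ] V) :
    {i // LinearMap.ker (l i) ≠ LinearMap.ker (l c)} → Module.Dual ℝ W :=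
  fun i => l i ∘ₗ φ

variable {l : ι → Module.Dual ℝ V} {c : ι} {φ : W →ₗ[ℝ] V}

lemma SpansFace.isFacet_of_generic {c : ι} {v : V} (h : SpansFace l v)
    (hv : ∀ i, l i v = 0 ↔ LinearMap.ker (l i) = LinearMap.ker (l c)) : IsFacet l c := by
  obtain ⟨w, hzero, hpos⟩ := h
  exact ⟨w, hzero c ((hv c).2 rfl), fun i hi => hpos i (mt (hv i).1 hi)⟩

lemma restrict_ne_zero (hl : ∀ i, l i ≠ 0) (hφ : LinearMap.range φ = LinearMap.ker (l c))
    (i : {i // LinearMap.ker (l i) ≠ LinearMap.ker (l c)}) : restrict l c φ i ≠ 0 := fun h => by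
  have hle : LinearMap.ker (l c) ≤ LinearMap.ker (l i) :=
    hφ.ge.trans (LinearMap.range_le_ker_iff.2 h)
  exact i.2 (ker_eq_of_ker_le (hl i) hle).symm

lemma SpansFace.restrict (hφ : LinearMap.range φ = LinearMap.ker (l c)) {w : W}
    (h : SpansFace l (φ w)) : SpansFace (restrict l c φ) w := by
  obtain ⟨u, hzero, hpos⟩ := h
  have hcw : φ w ∈ LinearMap.ker (l c) := hφ ▸ LinearMap.mem_range_self φ w
  obtain ⟨u, rfl⟩ : u ∈ LinearMap.range φ := hφ ▸ hzero c hcw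
  exact ⟨u, fun i => hzero i, fun i => hpos i⟩

lemma exists_restrict_pos (hφ : LinearMap.range φ = LinearMap.ker (l c)) (hc : IsFacet l c) :
    ∃ o, ∀ i, 0 < restrict l c φ i o := by
  obtain ⟨w, hcw, hw⟩ := hc
  obtain ⟨o, rfl⟩ : w ∈ LinearMap.range φ := hφ ▸ hcw
  exact ⟨o, fun i => hw i i.2⟩

lemma IsRidgePoint.isFacet_restrict (hl : ∀ i, l i ≠ 0)
    (hφ : LinearMap.range φ = LinearMap.ker (l c)) {a : ι} {b : V} (hb : IsRidgePoint l a c b)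
    (hac : LinearMap.ker (l a) ≠ LinearMap.ker (l c)) : IsFacet (restrict l c φ) ⟨a, hac⟩ := by
  obtain ⟨b, rfl⟩ : b ∈ LinearMap.range φ := hφ ▸ hb.apply_right
  refine ⟨b, hb.apply_left, fun i hi => (hb.nonneg i).lt_of_ne' fun hib => hi ?_⟩
  exact (ker_eq_of_ker_le (restrict_ne_zero hl hφ i)
    ((ker_comp_le_ker_comp_iff hφ).2 (hb.ker_inf_le i hib))).symm

end Restriction

section Orders

variable {ι V W : Type*} [Fintype ι] [AddCommGroup V] [Module ℝ V] [AddCommGroup W] [Module ℝ W]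

/-- The number of forms that define the same hyperplane as `l a`. -/
def mult (l : ι → Module.Dual ℝ V) (a : ι) : ℕ :=
  #{i | LinearMap.ker (l i) = LinearMap.ker (l a)}

/-- The indices of the hyperplanes through `v`. -/
def flat (l : ι → Module.Dual ℝ V) (v : V) : Finset ι :=
  {i | l i v = 0}

/-- The nullity of the flat of `v`; the subtraction is never truncated. -/
def nullity (l : ι → Module.Dual ℝ V) (v : V) : ℕ :=
  #(flat l v) - Module.finrank ℝ (Submodule.span ℝ (l '' flat l v))

/-- The intersection of the hyperplanes through `v`. -/
def flatSpace (l : ι → Module.Dual ℝ V) (v : V) : Submodule ℝ V :=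
  (Submodule.span ℝ (l '' flat l v)).dualCoannihilator

/-- The vanishing order that an adjoint polynomial has at `v`. -/
def adjointOrder (l : ι → Module.Dual ℝ V) (v : V) : ℕ :=
  if SpansFace l v then nullity l v else nullity l v + 1

variable {l : ι → Module.Dual ℝ V}

@[simp]
lemma mem_flat {v : V} {i : ι} : i ∈ flat l v ↔ l i v = 0 := by
  simp [flat]

lemma mem_flatSpace {v x : V} : x ∈ flatSpace l v ↔ ∀ i, l i v = 0 → l i x = 0 := by
  rw [← SetLike.mem_coe, flatSpace, Submodule.coe_dualCoannihilator_span]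
  simp

lemma mult_pos (l : ι → Module.Dual ℝ V) (a : ι) : 0 < mult l a :=
  card_pos.2 ⟨a, by simp⟩

lemma mult_eq_one {i : ι} (hne : ∀ j, j ≠ i → LinearMap.ker (l j) ≠ LinearMap.ker (l i)) :
    mult l i = 1 := by
  rw [mult, card_eq_one]
  exact ⟨i, by ext j; simpa using ⟨not_imp_not.1 (hne j), fun h => h ▸ rfl⟩⟩

lemma mult_congr {a b : ι} (h : LinearMap.ker (l a) = LinearMap.ker (l b)) :
    mult l a = mult l b := by
  rw [mult, mult, h]

lemma nullity_add_finrank [FiniteDimensional ℝ V] (l : ι → Module.Dual ℝ V) (v : V) :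
    nullity l v + Module.finrank ℝ V = #(flat l v) + Module.finrank ℝ (flatSpace l v) := by
  have hrank : Module.finrank ℝ (Submodule.span ℝ (l '' flat l v)) ≤ #(flat l v) := by
    rw [← coe_image]
    exact (finrank_span_finset_le_card _).trans card_image_le
  have hdim := Subspace.finrank_add_finrank_dualCoannihilator_eq
    (Submodule.span ℝ (l '' flat l v))
  rw [nullity, flatSpace]
  omega

lemma nullity_add_one_of_generic [FiniteDimensional ℝ V] {c : ι} (hc : l c ≠ 0) {v : V}
    (hv : ∀ i, l i v = 0 ↔ LinearMap.ker (l i) = LinearMap.ker (l c)) :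
    nullity l v + 1 = mult l c := by
  have hspace : flatSpace l v = LinearMap.ker (l c) := by
    ext x
    refine mem_flatSpace.trans ⟨fun hx => hx c ((hv c).2 rfl), fun hx i hi => ?_⟩
    rwa [← LinearMap.mem_ker, (hv i).1 hi]
  have hflat : flat l v = ({i | LinearMap.ker (l i) = LinearMap.ker (l c)} : Finset ι) := by
    ext i
    simp [hv]
  have hnull := nullity_add_finrank l v
  have hdim := Module.Dual.finrank_ker_add_one_of_ne_zero hc
  rw [hspace, hflat] at hnull
  rw [mult]
  omega

lemma nullity_le_adjointOrder (l : ι → Module.Dual ℝ V) (v : V) :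
    nullity l v ≤ adjointOrder l v := by
  rw [adjointOrder]
  split_ifs <;> omega

variable {c : ι} {φ : W →ₗ[ℝ] V}

lemma card_add_mult (l : ι → Module.Dual ℝ V) (c : ι) :
    Fintype.card {i // LinearMap.ker (l i) ≠ LinearMap.ker (l c)} + mult l c = Fintype.card ι := by
  rw [Fintype.card_subtype, mult, add_comm, ← card_univ]
  exact card_filter_add_card_filter_not _

lemma card_flat_restrict_add_mult (hφ : LinearMap.range φ = LinearMap.ker (l c)) (w : W) :
    #(flat (restrict l c φ) w) + mult l c = #(flat l (φ w)) := by
  have hclass : {i ∈ flat l (φ w) | LinearMap.ker (l i) = LinearMap.ker (l c)} =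
      ({i | LinearMap.ker (l i) = LinearMap.ker (l c)} : Finset ι) := by
    ext i
    simp only [mem_filter, mem_flat, mem_univ, true_and, and_iff_right_iff_imp]
    intro hi
    rw [← LinearMap.mem_ker, hi, ← hφ]
    exact LinearMap.mem_range_self φ w
  have hrest : (flat (restrict l c φ) w).map (Function.Embedding.subtype _) =
      {i ∈ flat l (φ w) | LinearMap.ker (l i) ≠ LinearMap.ker (l c)} := by
    ext i
    simp [restrict, and_comm]
  rw [mult, ← hclass, ← card_map, hrest, add_comm]
  exact card_filter_add_card_filter_not _

lemma finrank_flatSpace_restrict_le [FiniteDimensional ℝ V] (hinj : Function.Injective φ)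
    (hφ : LinearMap.range φ = LinearMap.ker (l c)) (w : W) :
    Module.finrank ℝ (flatSpace (restrict l c φ) w) ≤ Module.finrank ℝ (flatSpace l (φ w)) := by
  rw [(Submodule.equivMapOfInjective φ hinj _).finrank_eq]
  refine Submodule.finrank_mono ?_
  rintro _ ⟨x, hx, rfl⟩
  refine mem_flatSpace.2 fun i hi => ?_
  by_cases hic : LinearMap.ker (l i) = LinearMap.ker (l c)
  · rw [← LinearMap.mem_ker, hic, ← hφ]
    exact LinearMap.mem_range_self φ x
  · exact mem_flatSpace.1 hx ⟨i, hic⟩ hi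

lemma adjointOrder_restrict_add_mult_le [FiniteDimensional ℝ V] (hc : l c ≠ 0)
    (hinj : Function.Injective φ) (hφ : LinearMap.range φ = LinearMap.ker (l c)) (w : W) :
    adjointOrder (restrict l c φ) w + mult l c ≤ adjointOrder l (φ w) + 1 := by
  have := FiniteDimensional.of_injective φ hinj
  have hnull := nullity_add_finrank l (φ w)
  have hnull' := nullity_add_finrank (restrict l c φ) w
  have hcard := card_flat_restrict_add_mult hφ w
  have hspace := finrank_flatSpace_restrict_le hinj hφ w
  have hdim := Module.Dual.finrank_ker_add_one_of_ne_zero hc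
  rw [← hφ, LinearMap.finrank_range_of_inj hinj] at hdim
  have hface : SpansFace l (φ w) → SpansFace (restrict l c φ) w := SpansFace.restrict hφ
  simp only [adjointOrder]
  split_ifs <;> first | omega | tauto

end Orders

section AdjointPolynomials

variable {ι σ τ K : Type*} [Fintype ι] [Field K] [Algebra ℝ K]

/-- The vanishing conditions that characterize adjoint polynomials of the cone
`{x | ∀ i, 0 ≤ l i x}`, here for a family with possibly proportional forms. -/
def SatisfiesAdjoint (l : ι → Module.Dual ℝ (σ → ℝ)) (f : MvPolynomial σ K) : Prop :=
  ∀ v, v ≠ 0 → VanishesToOrder v (adjointOrder l v) f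

variable [Fintype σ] {l : ι → Module.Dual ℝ (σ → ℝ)} {f g : MvPolynomial σ K} {c : ι}

lemma SatisfiesAdjoint.linPoly_pow_dvd (hf : SatisfiesAdjoint l f) (hl : ∀ i, l i ≠ 0)
    (hc : ∃ i, LinearMap.ker (l i) ≠ LinearMap.ker (l c)) {k : ℕ}
    (hk : ∀ v, (∀ i, l i v = 0 ↔ LinearMap.ker (l i) = LinearMap.ker (l c)) →
      k ≤ adjointOrder l v) : linPoly K (l c) ^ k ∣ f := by
  refine linPoly_pow_dvd_of_vanishesToOrder_off_hyperplanes
    {i | LinearMap.ker (l i) ≠ LinearMap.ker (l c)} (hl c) (q := l) (fun i hi hle => ?_) k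
    fun v hcv hv => ?_
  · exact (mem_filter.1 hi).2 (ker_eq_of_ker_le (hl i) hle).symm
  · have hgen : ∀ i, l i v = 0 ↔ LinearMap.ker (l i) = LinearMap.ker (l c) := fun i =>
      ⟨fun hi => of_not_not fun hne => hv i (by simpa using hne) hi,
        fun hi => LinearMap.mem_ker.1 (hi ▸ hcv)⟩
    obtain ⟨i, hi⟩ := hc
    refine (hf v ?_).mono (hk v hgen)
    rintro rfl
    exact hi ((hgen i).1 (map_zero _))

lemma SatisfiesAdjoint.linPoly_pow_mult_sub_one_dvd (hf : SatisfiesAdjoint l f)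
    (hl : ∀ i, l i ≠ 0) (hc : ∃ i, LinearMap.ker (l i) ≠ LinearMap.ker (l c)) :
    linPoly K (l c) ^ (mult l c - 1) ∣ f :=
  hf.linPoly_pow_dvd hl hc fun v hv => by
    have hnull := nullity_add_one_of_generic (hl c) hv
    have horder := nullity_le_adjointOrder l v
    omega

lemma SatisfiesAdjoint.linPoly_pow_mult_dvd_of_not_isFacet (hf : SatisfiesAdjoint l f)
    (hl : ∀ i, l i ≠ 0) (hc : ∃ i, LinearMap.ker (l i) ≠ LinearMap.ker (l c))
    (hfacet : ¬ IsFacet l c) : linPoly K (l c) ^ mult l c ∣ f :=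
  hf.linPoly_pow_dvd hl hc fun v hv => by
    rw [adjointOrder, if_neg fun h => hfacet (h.isFacet_of_generic hv),
      nullity_add_one_of_generic (hl c) hv]

lemma linPoly_pow_mult_dvd_congr (hl : ∀ i, l i ≠ 0) {i j : ι}
    (h : LinearMap.ker (l i) = LinearMap.ker (l j)) (hi : linPoly K (l i) ^ mult l i ∣ f) :
    linPoly K (l j) ^ mult l j ∣ f := by
  rw [← mult_congr h]
  exact (associated_linPoly (hl j) (hl i) h.symm).pow_pow.dvd.trans hi

lemma prod_linPoly_dvd (hl : ∀ i, l i ≠ 0) {I : Finset ι}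
    (hI : ∀ i ∈ I, linPoly K (l i) ^ mult l i ∣ f) : ∏ i ∈ I, linPoly K (l i) ∣ f := by
  rw [← prod_fiberwise_of_maps_to (t := I.image fun i => LinearMap.ker (l i))
    fun i hi => mem_image_of_mem _ hi]
  refine prod_dvd_of_isRelPrime (fun H _ H' _ hne => ?_) fun H hH => ?_
  · refine IsRelPrime.prod_left fun i hi => IsRelPrime.prod_right fun j hj => ?_
    refine isRelPrime_linPoly (hl i) (hl j) ?_
    rwa [(mem_filter.1 hi).2, (mem_filter.1 hj).2]
  · obtain ⟨a, ha, rfl⟩ := mem_image.1 hH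
    have hle : #{i ∈ I | LinearMap.ker (l i) = LinearMap.ker (l a)} ≤ mult l a :=
      card_le_card (filter_subset_filter _ (subset_univ _))
    exact (associated_prod_linPoly hl fun i hi => (mem_filter.1 hi).2).dvd.trans
      ((pow_dvd_pow _ hle).trans (hI a ha))

lemma eq_zero_of_forall_linPoly_pow_mult_dvd (hl : ∀ i, l i ≠ 0)
    (hdeg : f.totalDegree < Fintype.card ι) (hf : ∀ i, linPoly K (l i) ^ mult l i ∣ f) :
    f = 0 := by
  by_contra hf0
  have hdvd := prod_linPoly_dvd (I := univ) hl fun i _ => hf i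
  have hle := totalDegree_le_of_dvd_of_isDomain hdvd hf0
  rw [totalDegree_prod_linPoly univ fun i _ => hl i, card_univ] at hle
  omega

variable [Fintype τ] {φ : (τ → ℝ) →ₗ[ℝ] (σ → ℝ)}

lemma SatisfiesAdjoint.restrict (hf : SatisfiesAdjoint l (linPoly K (l c) ^ (mult l c - 1) * g))
    (hc : l c ≠ 0) (hinj : Function.Injective φ) (hφ : LinearMap.range φ = LinearMap.ker (l c)) :
    SatisfiesAdjoint (restrict l c φ) (subst φ g) := fun w hw => by
  have hcw : φ w ∈ LinearMap.ker (l c) := hφ ▸ LinearMap.mem_range_self φ w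
  have horder : adjointOrder (FormArrangement.restrict l c φ) w + (mult l c - 1) ≤
      adjointOrder l (φ w) := by
    have := adjointOrder_restrict_add_mult_le hc hinj hφ w
    have := mult_pos l c
    omega
  have hvan := (hf (φ w) ((map_ne_zero_iff φ hinj).2 hw)).mono horder
  exact (hvan.of_linPoly_pow_mul hc hcw).subst

lemma linPoly_restrict_pow_mult_dvd (hl : ∀ i, l i ≠ 0)
    (hφ : LinearMap.range φ = LinearMap.ker (l c)) {m : ℕ}
    (a : {i // LinearMap.ker (l i) ≠ LinearMap.ker (l c)})
    (ha : ∀ i, LinearMap.ker (restrict l c φ i) = LinearMap.ker (restrict l c φ a) →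
      linPoly K (l i) ^ mult l i ∣ linPoly K (l c) ^ m * g) :
    linPoly K (restrict l c φ a) ^ mult (restrict l c φ) a ∣ subst φ g := by
  let I : Finset {i // LinearMap.ker (l i) ≠ LinearMap.ker (l c)} :=
    {i | LinearMap.ker (restrict l c φ i) = LinearMap.ker (restrict l c φ a)}
  have hI : ∀ i ∈ I, LinearMap.ker (restrict l c φ i) = LinearMap.ker (restrict l c φ a) :=
    fun i hi => (mem_filter.1 hi).2
  have hprod : ∏ i ∈ I.map (Function.Embedding.subtype _), linPoly K (l i) ∣
      linPoly K (l c) ^ m * g := by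
    refine prod_linPoly_dvd hl fun i hi => ?_
    obtain ⟨j, hj, rfl⟩ := mem_map.1 hi
    exact ha j (hI j hj)
  rw [prod_map] at hprod
  have hcoprime : IsRelPrime (∏ i ∈ I, linPoly K (l i)) (linPoly K (l c) ^ m) :=
    (IsRelPrime.prod_left fun i _ => isRelPrime_linPoly (hl i.1) (hl c) i.2).pow_right
  have hrestrict := map_dvd (subst φ) (hcoprime.dvd_of_dvd_mul_left hprod)
  simp only [map_prod, subst_linPoly] at hrestrict
  exact (associated_prod_linPoly (restrict_ne_zero hl hφ) hI).symm.dvd.trans hrestrict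

lemma SatisfiesAdjoint.linPoly_pow_mult_dvd_of_ker_inf_le (hf : SatisfiesAdjoint l f)
    (hl : ∀ i, l i ≠ 0) {a : ι} (ha : IsFacet l a) (hc : IsFacet l c)
    (hdvd : linPoly K (l a) ^ mult l a ∣ f) (hndvd : ¬ linPoly K (l c) ^ mult l c ∣ f) {i : ι}
    (hi : LinearMap.ker (l i) ≠ LinearMap.ker (l c))
    (hle : LinearMap.ker (l a) ⊓ LinearMap.ker (l c) ≤ LinearMap.ker (l i)) :
    linPoly K (l i) ^ mult l i ∣ f := by
  by_cases hfacet : IsFacet l i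
  · have hac : LinearMap.ker (l a) ≠ LinearMap.ker (l c) := fun h =>
      hndvd (linPoly_pow_mult_dvd_congr hl h hdvd)
    have hia := (ha.ker_eq_or_ker_eq hc hfacet hac hle).resolve_right hi
    exact linPoly_pow_mult_dvd_congr hl hia.symm hdvd
  · exact hf.linPoly_pow_mult_dvd_of_not_isFacet hl ⟨c, hi.symm⟩ hfacet

lemma SatisfiesAdjoint.exists_isRidgePoint (hf : SatisfiesAdjoint l f) (hf0 : f ≠ 0)
    (hl : ∀ i, l i ≠ 0) {o : σ → ℝ} (ho : ∀ i, 0 < l i o) (hdeg : f.totalDegree < Fintype.card ι)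
    {a₀ : ι} (ha₀ : IsFacet l a₀) (hdvd : linPoly K (l a₀) ^ mult l a₀ ∣ f) :
    ∃ a c b, linPoly K (l a) ^ mult l a ∣ f ∧ ¬ linPoly K (l c) ^ mult l c ∣ f ∧
      IsRidgePoint l a c b := by
  obtain ⟨c, hc⟩ : ∃ c, ¬ linPoly K (l c) ^ mult l c ∣ f := by
    by_contra! hall
    exact hf0 (eq_zero_of_forall_linPoly_pow_mult_dvd hl hdeg hall)
  have hne : LinearMap.ker (l a₀) ≠ LinearMap.ker (l c) := fun h =>
    hc (linPoly_pow_mult_dvd_congr hl h hdvd)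
  have hfacet : IsFacet l c := of_not_not fun h =>
    hc (hf.linPoly_pow_mult_dvd_of_not_isFacet hl ⟨a₀, hne⟩ h)
  exact FormArrangement.exists_isRidgePoint hl ho (linPoly_pow_mult_dvd_congr hl) ha₀ hfacet hdvd hc

theorem eq_zero_of_linPoly_pow_mult_dvd {N : ℕ} {ι : Type*} [Fintype ι]
    {l : ι → Module.Dual ℝ (Fin N → ℝ)} (hl : ∀ i, l i ≠ 0) (ho : ∃ o, ∀ i, 0 < l i o)
    {f : MvPolynomial (Fin N) K} (hdeg : f.totalDegree + N ≤ Fintype.card ι)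
    (hf : SatisfiesAdjoint l f) {a₀ : ι} (ha₀ : IsFacet l a₀)
    (hdvd : linPoly K (l a₀) ^ mult l a₀ ∣ f) : f = 0 := by
  induction N generalizing ι with
  | zero => exact absurd (Subsingleton.elim _ _) (hl a₀)
  | succ N ih =>
    by_contra hf0
    obtain ⟨o, ho⟩ := ho
    obtain ⟨a, c, b, ha, hc, hb⟩ := hf.exists_isRidgePoint hf0 hl ho (by omega) ha₀ hdvd
    have hac : LinearMap.ker (l a) ≠ LinearMap.ker (l c) := fun h =>
      hc (linPoly_pow_mult_dvd_congr hl h ha)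
    obtain ⟨φ, hinj, hφ⟩ := exists_injective_range_eq_ker (hl c)
    obtain ⟨g, rfl⟩ := hf.linPoly_pow_mult_sub_one_dvd hl ⟨a, hac⟩
    have hg : subst φ g = 0 := by
      refine ih (restrict_ne_zero hl hφ) (exists_restrict_pos hφ hb.isFacet_right) ?_
        (hf.restrict (hl c) hinj hφ) (hb.isFacet_restrict hl hφ hac) ?_
      · rw [totalDegree_mul_of_isDomain (left_ne_zero_of_mul hf0) (right_ne_zero_of_mul hf0),
          totalDegree_linPoly_pow (hl c)] at hdeg
        have hcard := card_add_mult l c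
        have hsubst := totalDegree_subst_le φ g
        omega
      · refine linPoly_restrict_pow_mult_dvd (m := mult l c - 1) hl hφ ⟨a, hac⟩ fun i hi => ?_
        exact hf.linPoly_pow_mult_dvd_of_ker_inf_le hl hb.isFacet_left hb.isFacet_right ha hc i.2
          ((ker_comp_le_ker_comp_iff hφ).1 hi.ge)
    refine hc ?_
    rw [← pow_sub_one_mul (mult_pos l c).ne']
    exact mul_dvd_mul_left _ ((linPoly_dvd_iff_subst_eq_zero (hl c) hφ).2 hg)

end AdjointPolynomials

section Polytopes

variable {n d : ℕ} {l : Fin d → Module.Dual ℝ (Fin (n + 1) → ℝ)}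

lemma toC_linPoly (l : Module.Dual ℝ (Fin (n + 1) → ℝ)) : toC (linPoly ℝ l) = linPoly ℂ l := by
  simp [toC, linPoly_apply]

lemma lift1_sub_lift1 (x y : Fin n → ℝ) : lift1 x - lift1 y = Fin.cons 0 (x - y) := by
  refine _root_.funext (Fin.cases ?_ fun j => ?_) <;> simp [lift1]

lemma finrank_direction_add_one_le {Q : Set (Fin n → ℝ)} (hQ : Q.Nonempty)
    {U : Submodule ℝ (Fin (n + 1) → ℝ)} (hU : ∀ y ∈ Q, lift1 y ∈ U) :
    Module.finrank ℝ (affineSpan ℝ Q).direction + 1 ≤ Module.finrank ℝ U := by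
  let e : (Fin n → ℝ) →ₗ[ℝ] (Fin (n + 1) → ℝ) :=
    (Fin.consLinearEquiv ℝ fun _ : Fin (n + 1) => ℝ).toLinearMap ∘ₗ LinearMap.inr ℝ ℝ (Fin n → ℝ)
  have he : Function.Injective e :=
    (Fin.consLinearEquiv ℝ fun _ : Fin (n + 1) => ℝ).injective.comp LinearMap.inr_injective
  rw [direction_affineSpan, (Submodule.equivMapOfInjective e he _).finrank_eq, Nat.succ_le_iff]
  refine Submodule.finrank_lt_finrank_of_lt (SetLike.lt_iff_le_and_exists.2 ⟨?_, ?_⟩)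
  · rw [vectorSpan_def, Submodule.map_span, Submodule.span_le]
    rintro _ ⟨_, ⟨x, hx, y, hy, rfl⟩, rfl⟩
    have hsub := U.sub_mem (hU x hx) (hU y hy)
    rw [lift1_sub_lift1] at hsub
    exact hsub
  · obtain ⟨y, hy⟩ := hQ
    refine ⟨lift1 y, hU y hy, ?_⟩
    rintro ⟨x, -, hx⟩
    exact zero_ne_one (congrFun hx 0)

lemma exists_pos_of_finrank_le {ι : Type*} [Finite ι] {l : ι → Module.Dual ℝ (Fin (n + 1) → ℝ)}
    {Q : Set (Fin n → ℝ)} (hQ : Q.Nonempty) (hnonneg : ∀ y ∈ Q, ∀ i, 0 ≤ l i (lift1 y))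
    {U : Submodule ℝ (Fin (n + 1) → ℝ)} (hU : ∀ y ∈ Q, lift1 y ∈ U)
    (hdim : Module.finrank ℝ U ≤ Module.finrank ℝ (affineSpan ℝ Q).direction + 1) :
    ∃ w ∈ U, ∀ i, ¬ U ≤ LinearMap.ker (l i) → 0 < l i w := by
  cases nonempty_fintype ι
  have hpoint : ∀ i, ∃ y ∈ Q, ¬ U ≤ LinearMap.ker (l i) → 0 < l i (lift1 y) := fun i => by
    by_contra! hzero
    have hlt : U ⊓ LinearMap.ker (l i) < U := inf_lt_left.2 (hzero _ hQ.some_mem).1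
    have hle := finrank_direction_add_one_le hQ (U := U ⊓ LinearMap.ker (l i)) fun y hy =>
      ⟨hU y hy, le_antisymm (hzero y hy).2 (hnonneg y hy i)⟩
    exact (hdim.trans hle).not_gt (Submodule.finrank_lt_finrank_of_lt hlt)
  choose y hy hpos using hpoint
  refine ⟨∑ i, lift1 (y i), U.sum_mem fun i _ => hU _ (hy i), fun i hi => ?_⟩
  rw [map_sum]
  exact sum_pos' (fun j _ => hnonneg _ (hy j) i) ⟨i, mem_univ i, hpos i hi⟩

lemma flatOf_linPoly (l : Fin d → Module.Dual ℝ (Fin (n + 1) → ℝ)) (v : Fin (n + 1) → ℝ) :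
    flatOf (fun i => linPoly ℝ (l i)) v = flat l v := by
  simp only [flatOf, flat, eval_linPoly]

lemma rkOf_linPoly (l : Fin d → Module.Dual ℝ (Fin (n + 1) → ℝ)) (v : Fin (n + 1) → ℝ) :
    rkOf (fun i => linPoly ℝ (l i)) v = Module.finrank ℝ (Submodule.span ℝ (l '' flat l v)) := by
  rw [(Submodule.equivMapOfInjective (linPoly ℝ) linPoly_injective _).finrank_eq,
    Submodule.map_span, Set.image_image, rkOf, flatOf_linPoly]

lemma nlOf_linPoly (l : Fin d → Module.Dual ℝ (Fin (n + 1) → ℝ)) (v : Fin (n + 1) → ℝ) :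
    nlOf (fun i => linPoly ℝ (l i)) v = nullity l v := by
  rw [nlOf, flatOf_linPoly, rkOf_linPoly, nullity]

lemma spansFace_of_finrank_faceOf {v : Fin (n + 1) → ℝ} (hv : v ≠ 0)
    (hne : (faceOf (fun i => linPoly ℝ (l i)) v).Nonempty)
    (hdim : Module.finrank ℝ (affineSpan ℝ (faceOf (fun i => linPoly ℝ (l i)) v)).direction =
      n - rkOf (fun i => linPoly ℝ (l i)) v) : SpansFace l v := by
  have hmem : v ∈ flatSpace l v := mem_flatSpace.2 fun _ => id
  have hpos : Module.finrank ℝ (flatSpace l v) ≠ 0 := fun h =>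
    hv ((Submodule.mem_bot ℝ).1 (Submodule.finrank_eq_zero.1 h ▸ hmem))
  have hrank : Module.finrank ℝ (Submodule.span ℝ (l '' flat l v)) +
      Module.finrank ℝ (flatSpace l v) = n + 1 := by
    rw [flatSpace, Subspace.finrank_add_finrank_dualCoannihilator_eq, Module.finrank_fin_fun]
  rw [rkOf_linPoly] at hdim
  obtain ⟨w, hw, hwpos⟩ := exists_pos_of_finrank_le (U := flatSpace l v) hne
    (fun y hy i => eval_linPoly (l i) _ ▸ hy.1 i)
    (fun y hy => mem_flatSpace.2 fun i hi =>
      eval_linPoly (l i) _ ▸ hy.2 i (flatOf_linPoly l v ▸ mem_flat.2 hi)) (by omega)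
  exact ⟨w, mem_flatSpace.1 hw, fun i hi => hwpos i fun hle => hi (hle hmem)⟩

lemma adjointOrder_le_ordOf (l : Fin d → Module.Dual ℝ (Fin (n + 1) → ℝ)) {v : Fin (n + 1) → ℝ}
    (hv : v ≠ 0) : adjointOrder l v ≤ ordOf (fun i => linPoly ℝ (l i)) v := by
  rw [adjointOrder, ordOf, nlOf_linPoly]
  split_ifs with hspan hface hface
  · exact le_rfl
  · exact Nat.le_succ _
  · exact absurd (spansFace_of_finrank_faceOf hv hface.1 hface.2) hspan
  · exact le_rfl

lemma satisfiesAdjoint_of_mem_pointIdealC_pow {f : MvPolynomial (Fin (n + 1)) ℂ}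
    (hf : ∀ v, v ≠ 0 → f ∈ pointIdealC v ^ ordOf (fun i => linPoly ℝ (l i)) v) :
    SatisfiesAdjoint l f := fun v hv => by
  have hvan : VanishesToOrder v (ordOf (fun i => linPoly ℝ (l i)) v) f :=
    vanishesToOrder_of_mem_pow (hf v hv)
  exact hvan.mono (adjointOrder_le_ordOf l hv)

lemma isFacet_of_finrank_facetOf {i : Fin d} (hl : ∀ j, l j ≠ 0)
    (hne : (facetOf (fun i => linPoly ℝ (l i)) i).Nonempty)
    (hdim : Module.finrank ℝ (affineSpan ℝ (facetOf (fun i => linPoly ℝ (l i)) i)).direction =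
      n - 1) : IsFacet l i := by
  have hker := Module.Dual.finrank_ker_add_one_of_ne_zero (hl i)
  rw [Module.finrank_fin_fun] at hker
  obtain ⟨w, hw, hpos⟩ := exists_pos_of_finrank_le (U := LinearMap.ker (l i)) hne
    (fun y hy j => eval_linPoly (l j) _ ▸ hy.1 j)
    (fun y hy => LinearMap.mem_ker.2 (eval_linPoly (l i) _ ▸ hy.2)) (by omega)
  exact ⟨w, hw, fun j hj => hpos j fun hle => hj (ker_eq_of_ker_le (hl j) hle).symm⟩

end Polytopes

end FormArrangement

open FormArrangement in
theorem adjoint_not_vanishing_on_facet_hyperplanes_general {n d : ℕ}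
    {ℓ : Fin d → MvPolynomial (Fin (n + 1)) ℝ} (hhom : ∀ j, (ℓ j).IsHomogeneous 1)
    {f : MvPolynomial (Fin (n + 1)) ℂ} (hf0 : f ≠ 0) (hdeg : f.totalDegree + (n + 1) ≤ d)
    (hvan : ∀ v : Fin (n + 1) → ℝ, v ≠ 0 → f ∈ pointIdealC v ^ ordOf ℓ v) {i : Fin d}
    (hprop : ∀ j, i ≠ j → ∀ c : ℝ, c • ℓ i ≠ ℓ j) (hfacet_ne : (facetOf ℓ i).Nonempty)
    (hfacet : Module.finrank ℝ (affineSpan ℝ (facetOf ℓ i)).direction = n - 1) :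
    ¬ toC (ℓ i) ∣ f := by
  choose l hl using fun j => exists_linPoly_eq (hhom j)
  obtain rfl : (fun j => linPoly ℝ (l j)) = ℓ := _root_.funext hl
  intro hdvd
  rw [toC_linPoly] at hdvd
  have hl0 : ∀ j, l j ≠ 0 := fun j hj => by
    rcases eq_or_ne i j with rfl | hij
    · exact hf0 (by simpa [hj] using hdvd)
    · exact hprop j hij 0 (by simp [hj])
  have hker : ∀ j, j ≠ i → LinearMap.ker (l j) ≠ LinearMap.ker (l i) := fun j hj h => by
    obtain ⟨c, hc⟩ := exists_eq_smul_of_ker_le h.ge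
    exact hprop j hj.symm c (by simp [hc])
  have hi := isFacet_of_finrank_facetOf hl0 hfacet_ne hfacet
  refine hf0 (eq_zero_of_linPoly_pow_mult_dvd hl0 (hi.exists_pos (hl0 i) hker) (by simpa)
    (satisfiesAdjoint_of_mem_pointIdealC_pow hvan) hi ?_)
  rwa [mult_eq_one hker, pow_one]

/-- A nonzero homogeneous polynomial `f ∈ ℂ[X₀,…,Xₙ]` of degree `d − n − 1`
satisfying the vanishing conditions `f ∈ I_v^{ord_P(L_v)}` for all nonzero `v ∈ ℝ^{n+1}` is
not divisible by any of the facet equations `ℓᵢ`; i.e. `f` does not vanish identically on any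
facet hyperplane of `P`. -/
theorem adjoint_not_vanishing_on_facet_hyperplanes {n d : ℕ}
    (ℓ : Fin d → MvPolynomial (Fin (n + 1)) ℝ) (hP : IsPolytopeSetup ℓ)
    (f : MvPolynomial (Fin (n + 1)) ℂ) (hf0 : f ≠ 0)
    (hf : f.IsHomogeneous (d - n - 1))
    (hvan : ∀ v : Fin (n + 1) → ℝ, v ≠ 0 → f ∈ pointIdealC v ^ ordOf ℓ v) :
    ∀ i : Fin d, ¬ toC (ℓ i) ∣ f := by
  have hdeg : f.totalDegree + (n + 1) ≤ d := by have := hP.hd; rw [hf.totalDegree hf0]; omega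
  exact fun i => adjoint_not_vanishing_on_facet_hyperplanes_general hP.hhom hf0 hdeg hvan
    (hP.hprop i) (hP.hfacet_ne i) (hP.hfacet i)

end
end

section
/- Let P ⊆ ℝⁿ be a full-dimensional polytope and let L ⊆ ℝⁿ be an affine subspace of dimension l ≥ 1 such that L ∩ P is either empty or has dimension strictly less than l. Then L contains at most one face of P of dimension l − 1: any two faces of P of dimension l − 1 that are contained in L are equal. -/
/-- A face of a convex set `P`: a nonempty convex subset that is extreme in `P`. -/
def IsFaceOf {n : ℕ} (P F : Set (Fin n → ℝ)) : Prop :=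
  F.Nonempty ∧ Convex ℝ F ∧ IsExtreme ℝ P F

/-!
A convex extreme subset `F` of `P` satisfies `aff F ∩ P = F`: a point of `P` in the affine span of
`F` is an endpoint of a segment whose other endpoint and some interior point lie in `F`. A face of
dimension `l - 1` in `L` has the same affine span as `L ∩ P`, because the latter has dimension at
most `l - 1`. So every such face equals `aff (L ∩ P) ∩ P`.
-/

open Module

theorem affineSpan_eq_of_subset_of_finrank_le {k V A : Type*} [DivisionRing k] [AddCommGroup V]
    [Module k V] [AddTorsor V A] {s t : Set A} [FiniteDimensional k (affineSpan k t).direction]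
    (hs : s.Nonempty) (hst : s ⊆ t)
    (hdim : finrank k (affineSpan k t).direction ≤ finrank k (affineSpan k s).direction) :
    affineSpan k s = affineSpan k t := by
  have hle : affineSpan k s ≤ affineSpan k t := affineSpan_mono k hst
  exact AffineSubspace.eq_of_direction_eq_of_nonempty_of_le
    (Submodule.eq_of_le_of_finrank_le (AffineSubspace.direction_le hle) hdim)
    (hs.affineSpan k) hle

section Face

variable {𝕜 E : Type*} [Field 𝕜] [LinearOrder 𝕜] [IsStrictOrderedRing 𝕜] [AddCommGroup E]
  [Module 𝕜 E] {P F F₁ F₂ : Set E}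

-- If `y` has affine weights `w`, take `z` and `x` with weights proportional to `|w|` and `w + |w|`.
theorem exists_mem_openSegment_of_mem_affineSpan (hF : Convex 𝕜 F) {y : E}
    (hy : y ∈ affineSpan 𝕜 F) : ∃ z ∈ F, ∃ x ∈ F, x ∈ openSegment 𝕜 y z := by
  rw [← Subtype.range_coe (s := F)] at hy
  obtain ⟨s, w, hw, rfl⟩ := eq_affineCombination_of_mem_affineSpan hy
  rw [s.affineCombination_eq_linear_combination _ w hw]
  have hsF : ∀ p ∈ s, (p : E) ∈ F := fun p _ ↦ p.2
  set A := ∑ p ∈ s, |w p| with hA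
  have hA_pos : 0 < A :=
    calc (0 : 𝕜) < |∑ p ∈ s, w p| := by simp [hw]
      _ ≤ A := s.abs_sum_le_sum_abs w
  have hsum : ∑ p ∈ s, (w p + |w p|) = 1 + A := by rw [Finset.sum_add_distrib, hw]
  refine ⟨s.centerMass (fun p ↦ |w p|) (↑), ?_, s.centerMass (fun p ↦ w p + |w p|) (↑), ?_, ?_⟩
  · exact hF.centerMass_mem (fun p _ ↦ abs_nonneg (w p)) hA_pos hsF
  · exact hF.centerMass_mem (fun p _ ↦ by linarith [neg_abs_le (w p)])
      (by rw [hsum]; positivity) hsF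
  · refine ⟨(1 + A)⁻¹, (1 + A)⁻¹ * A, by positivity, by positivity, by field_simp, ?_⟩
    simp only [Finset.centerMass, hsum, ← hA, add_smul, Finset.sum_add_distrib, smul_add,
      mul_smul, smul_inv_smul₀ hA_pos.ne']

theorem inter_affineSpan_eq_of_isExtreme (hconv : Convex 𝕜 F) (hext : IsExtreme 𝕜 P F) :
    P ∩ affineSpan 𝕜 F = F := by
  refine Set.Subset.antisymm ?_ (Set.subset_inter hext.subset (subset_affineSpan 𝕜 F))
  rintro y ⟨hyP, hy⟩
  obtain ⟨z, hzF, x, hxF, hx⟩ := exists_mem_openSegment_of_mem_affineSpan hconv hy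
  exact hext.left_mem_of_mem_openSegment hyP (hext.subset hzF) hxF hx

theorem at_most_one_face_in_nonincident_subspace_general {L : AffineSubspace 𝕜 E}
    (hLP : finrank 𝕜 (affineSpan 𝕜 ((L : Set E) ∩ P)).direction < finrank 𝕜 L.direction)
    (hne₁ : F₁.Nonempty) (hne₂ : F₂.Nonempty) (hconv₁ : Convex 𝕜 F₁) (hconv₂ : Convex 𝕜 F₂)
    (hext₁ : IsExtreme 𝕜 P F₁) (hext₂ : IsExtreme 𝕜 P F₂)
    (hF₁L : F₁ ⊆ (L : Set E)) (hF₂L : F₂ ⊆ (L : Set E))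
    (hdim₁ : finrank 𝕜 (affineSpan 𝕜 F₁).direction + 1 = finrank 𝕜 L.direction)
    (hdim₂ : finrank 𝕜 (affineSpan 𝕜 F₂).direction + 1 = finrank 𝕜 L.direction) :
    F₁ = F₂ := by
  have : FiniteDimensional 𝕜 L.direction := FiniteDimensional.of_finrank_pos (by lia)
  have : FiniteDimensional 𝕜 (affineSpan 𝕜 ((L : Set E) ∩ P)).direction :=
    Submodule.finiteDimensional_of_le
      (AffineSubspace.direction_le (affineSpan_le.2 Set.inter_subset_left))
  have hspan₁ : affineSpan 𝕜 F₁ = affineSpan 𝕜 ((L : Set E) ∩ P) :=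
    affineSpan_eq_of_subset_of_finrank_le hne₁ (Set.subset_inter hF₁L hext₁.subset) (by lia)
  have hspan₂ : affineSpan 𝕜 F₂ = affineSpan 𝕜 ((L : Set E) ∩ P) :=
    affineSpan_eq_of_subset_of_finrank_le hne₂ (Set.subset_inter hF₂L hext₂.subset) (by lia)
  rw [← inter_affineSpan_eq_of_isExtreme hconv₁ hext₁, hspan₁, ← hspan₂,
    inter_affineSpan_eq_of_isExtreme hconv₂ hext₂]

end Face

/-- Let `P ⊆ ℝⁿ` be a full-dimensional polytope and `L` an affine subspace
of dimension `l ≥ 1` such that `L ∩ P` is empty or of dimension strictly less than `l`.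
Then any two faces of `P` of dimension `l − 1` contained in `L` coincide. -/
theorem at_most_one_face_in_nonincident_subspace {n l : ℕ}
    (P : Set (Fin n → ℝ)) (t : Finset (Fin n → ℝ)) (hP : P = convexHull ℝ (t : Set (Fin n → ℝ)))
    (hfull : affineSpan ℝ P = ⊤)
    (L : AffineSubspace ℝ (Fin n → ℝ))
    (hL : Module.finrank ℝ L.direction = l) (hl : 1 ≤ l)
    (hLP : (L : Set (Fin n → ℝ)) ∩ P = ∅ ∨
      Module.finrank ℝ (affineSpan ℝ ((L : Set (Fin n → ℝ)) ∩ P)).direction < l)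
    (F₁ F₂ : Set (Fin n → ℝ))
    (hF₁ : IsFaceOf P F₁) (hF₂ : IsFaceOf P F₂)
    (hF₁L : F₁ ⊆ (L : Set (Fin n → ℝ))) (hF₂L : F₂ ⊆ (L : Set (Fin n → ℝ)))
    (hdim₁ : Module.finrank ℝ (affineSpan ℝ F₁).direction = l - 1)
    (hdim₂ : Module.finrank ℝ (affineSpan ℝ F₂).direction = l - 1) :
    F₁ = F₂ := by
  have hlt := hLP.resolve_left (hF₁.1.mono (Set.subset_inter hF₁L hF₁.2.2.subset)).ne_empty
  exact at_most_one_face_in_nonincident_subspace_general (hL ▸ hlt) hF₁.1 hF₂.1 hF₁.2.1 hF₂.2.1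
    hF₁.2.2 hF₂.2.2 hF₁L hF₂L (by lia) (by lia)
end

section
/- For any three pairwise distinct indices i, j, k ∈ {1, …, d}, the linear forms ℓᵢ, ℓⱼ, ℓ_k are linearly independent over ℝ. Equivalently, no three facet hyperplanes of a full-dimensional convex polytope contain a common projective linear subspace of codimension 2 (in particular, a convex polytope cannot have three pairwise parallel facet hyperplanes). -/
open MvPolynomial Finset Classical

noncomputable section

/-!
Two of the three coefficients in a relation `a • ℓᵢ + b • ℓⱼ + c • ℓ_k = 0` have the same weak sign,
say `a` and `b`. At a point of the facet `F_k` the last term vanishes and the other two cannot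
cancel, so both vanish. As `F_k` spans the hyperplane `ℓ_k = 0`, a form vanishing on all of `F_k` is
proportional to `ℓ_k`; hence `ℓᵢ` and `ℓⱼ` are nonzero somewhere on `F_k`, forcing `a = b = 0`.
-/

section NonnegFacet

variable {R X ι : Type*}

/-- The part of the region `{x | ∀ m, 0 ≤ f m x}` on which the constraint `f i` is tight: the `i`-th
facet of the region cut out by a family of inequalities. No condition on its dimension is imposed,
and `X` carries no structure. -/
def nonnegFacet [Zero R] [LE R] (f : ι → X → R) (i : ι) : Set X :=
  {x | (∀ m, 0 ≤ f m x) ∧ f i x = 0}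

variable [CommRing R] [LinearOrder R] [IsStrictOrderedRing R]
  {f : ι → X → R} {i j k : ι} {a b c : R}

lemma left_coeff_eq_zero_of_mem_nonnegFacet {x : X} (hx : x ∈ nonnegFacet f k) (hix : f i x ≠ 0)
    (hab : 0 ≤ a * b) (h : a • f i + b • f j + c • f k = 0) : a = 0 := by
  have hsum : a * f i x + b * f j x = 0 := by
    simpa only [Pi.add_apply, Pi.smul_apply, smul_eq_mul, hx.2, mul_zero, add_zero, Pi.zero_apply]
      using congrFun h x
  have hprod : 0 ≤ (a * f i x) * (b * f j x) := by
    rw [mul_mul_mul_comm]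
    exact mul_nonneg hab (mul_nonneg (hx.1 i) (hx.1 j))
  have hterm : a * f i x = 0 := by
    rw [eq_neg_of_add_eq_zero_right hsum, mul_neg, neg_nonneg] at hprod
    exact mul_self_eq_zero.mp (hprod.antisymm (mul_self_nonneg _))
  exact (mul_eq_zero.mp hterm).resolve_right hix

lemma coeffs_eq_zero_of_mul_nonneg (hf : ∀ i k, i ≠ k → ∃ x ∈ nonnegFacet f k, f i x ≠ 0)
    (hik : i ≠ k) (hjk : j ≠ k) (hab : 0 ≤ a * b) (h : a • f i + b • f j + c • f k = 0) :
    a = 0 ∧ b = 0 ∧ c = 0 := by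
  obtain ⟨x, hx, hix⟩ := hf i k hik
  obtain ⟨y, hy, hjy⟩ := hf j k hjk
  obtain ⟨z, -, hkz⟩ := hf k i hik.symm
  obtain rfl : a = 0 := left_coeff_eq_zero_of_mem_nonnegFacet hx hix hab h
  obtain rfl : b = 0 :=
    left_coeff_eq_zero_of_mem_nonnegFacet hy hjy (mul_comm _ b ▸ hab) (add_comm _ (b • f j) ▸ h)
  have hc : c * f k z = 0 := by simpa using congrFun h z
  exact ⟨rfl, rfl, (mul_eq_zero.mp hc).resolve_right hkz⟩

theorem linearIndependent_three_of_nonnegFacet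
    (hf : ∀ i k, i ≠ k → ∃ x ∈ nonnegFacet f k, f i x ≠ 0)
    (hij : i ≠ j) (hik : i ≠ k) (hjk : j ≠ k) : LinearIndependent R ![f i, f j, f k] := by
  rw [Fintype.linearIndependent_iff]
  intro g hg
  replace hg : g 0 • f i + g 1 • f j + g 2 • f k = 0 := by
    simpa only [Fin.sum_univ_three, Matrix.cons_val] using hg
  suffices g 0 = 0 ∧ g 1 = 0 ∧ g 2 = 0 by simpa [Fin.forall_fin_succ]
  rcases mul_nonneg_of_three (g 0) (g 1) (g 2) with h01 | h12 | h20
  · exact coeffs_eq_zero_of_mul_nonneg hf hik hjk h01 hg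
  · have hg' : g 1 • f j + g 2 • f k + g 0 • f i = 0 := by rw [← hg]; abel
    obtain ⟨h1, h2, h0⟩ := coeffs_eq_zero_of_mul_nonneg hf hij.symm hik.symm h12 hg'
    exact ⟨h0, h1, h2⟩
  · have hg' : g 2 • f k + g 0 • f i + g 1 • f j = 0 := by rw [← hg]; abel
    obtain ⟨h2, h0, h1⟩ := coeffs_eq_zero_of_mul_nonneg hf hjk.symm hij h20 hg'
    exact ⟨h0, h1, h2⟩

end NonnegFacet

section AffineHyperplane

lemma vectorSpan_le_ker_linear_of_eqOn_zero {R V W P : Type*} [Ring R] [AddCommGroup V] [Module R V]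
    [AddTorsor V P] [AddCommGroup W] [Module R W] {s : Set P} {f : P →ᵃ[R] W}
    (hf : Set.EqOn f 0 s) : vectorSpan R s ≤ LinearMap.ker f.linear := by
  rw [vectorSpan_def, Submodule.span_le]
  rintro _ ⟨x, hx, y, hy, rfl⟩
  simp [hf hx, hf hy]

variable {K V P : Type*} [Field K] [AddCommGroup V] [Module K V]

lemma exists_smul_eq_of_ker_le_ker {φ ψ : V →ₗ[K] K}
    (h : LinearMap.ker φ ≤ LinearMap.ker ψ) : ∃ c : K, c • φ = ψ := by
  have hψ : ψ ∈ Submodule.span K (Set.range fun _ : Unit => φ) :=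
    mem_span_of_iInf_ker_le_ker (by rwa [iInf_const])
  rwa [Set.range_const, Submodule.mem_span_singleton] at hψ

variable [AddTorsor V P]

lemma exists_smul_eq_of_eqOn_zero {s : Set P} {f g : P →ᵃ[K] K} (hs : s.Nonempty)
    (hdim : Module.finrank K (vectorSpan K s) + 1 = Module.finrank K V) (hf : f ≠ 0)
    (hfs : Set.EqOn f 0 s) (hgs : Set.EqOn g 0 s) : ∃ c : K, c • f = g := by
  have : FiniteDimensional K V := Module.finite_of_finrank_pos (by lia)
  obtain ⟨x, hx⟩ := hs
  have hlinear : f.linear ≠ 0 := fun h => hf (AffineMap.ext_linear h (hfs hx))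
  have hspan : vectorSpan K s = LinearMap.ker f.linear := by
    refine Submodule.eq_of_le_of_finrank_eq (vectorSpan_le_ker_linear_of_eqOn_zero hfs) ?_
    have := Module.Dual.finrank_ker_add_one_of_ne_zero hlinear
    lia
  obtain ⟨c, hc⟩ := exists_smul_eq_of_ker_le_ker
    (hspan ▸ vectorSpan_le_ker_linear_of_eqOn_zero hgs)
  exact ⟨c, AffineMap.ext_linear (p := x) hc (by simp [hfs hx, hgs hx])⟩

end AffineHyperplane

section LinearForms

lemma exists_eq_sum_smul_X {R σ : Type*} [CommSemiring R] [Fintype σ] {p : MvPolynomial σ R}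
    (hp : p.IsHomogeneous 1) : ∃ a : σ → R, p = ∑ i, a i • X i := by
  rw [← mem_homogeneousSubmodule, homogeneousSubmodule_one_eq_span_X,
    Submodule.mem_span_range_iff_exists_fun] at hp
  exact hp.imp fun _ => Eq.symm

/-- Dehomogenization with respect to the variable `X₀`, recorded as the polynomial function
`y ↦ p(1, y₁, …, yₙ)` rather than as a polynomial. -/
def dehomogenize {R : Type*} [CommSemiring R] {n : ℕ} :
    MvPolynomial (Fin (n + 1)) R →ₗ[R] (Fin n → R) → R :=
  LinearMap.pi fun y => (aeval (Fin.cons 1 y : Fin (n + 1) → R)).toLinearMap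

lemma dehomogenize_sum_smul_X {R : Type*} [CommSemiring R] {n : ℕ} (a : Fin (n + 1) → R)
    (y : Fin n → R) : dehomogenize (∑ i, a i • X i) y = a 0 + ∑ i : Fin n, a i.succ * y i := by
  simp [dehomogenize, Fin.sum_univ_succ]

lemma injOn_dehomogenize_isHomogeneous_one {R : Type*} [CommRing R] {n : ℕ} :
    Set.InjOn dehomogenize {p : MvPolynomial (Fin (n + 1)) R | p.IsHomogeneous 1} := by
  intro p hp q hq hpq
  obtain ⟨a, rfl⟩ := exists_eq_sum_smul_X hp
  obtain ⟨b, rfl⟩ := exists_eq_sum_smul_X hq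
  have heval (y : Fin n → R) :
      a 0 + ∑ i : Fin n, a i.succ * y i = b 0 + ∑ i : Fin n, b i.succ * y i := by
    simpa only [dehomogenize_sum_smul_X] using congrFun hpq y
  have hzero : a 0 = b 0 := by simpa using heval 0
  have hsucc (i : Fin n) : a i.succ = b i.succ := by
    simpa [hzero, Pi.single_apply] using heval (Pi.single i 1)
  rw [show a = b from funext (Fin.cases hzero hsucc)]

lemma exists_affineMap_coe_eq_dehomogenize {R : Type*} [CommRing R] {n : ℕ}
    {p : MvPolynomial (Fin (n + 1)) R} (hp : p.IsHomogeneous 1) :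
    ∃ f : (Fin n → R) →ᵃ[R] R, ⇑f = dehomogenize p := by
  obtain ⟨a, rfl⟩ := exists_eq_sum_smul_X hp
  refine ⟨AffineMap.const R _ (a 0) +
    (∑ i : Fin n, a i.succ • LinearMap.proj i : (Fin n → R) →ₗ[R] R).toAffineMap, ?_⟩
  ext y
  simp [dehomogenize_sum_smul_X]

variable {K : Type*} [Field K] {n : ℕ}

lemma exists_smul_eq_of_dehomogenize_eqOn_zero {p q : MvPolynomial (Fin (n + 1)) K}
    (hp : p.IsHomogeneous 1) (hq : q.IsHomogeneous 1) (hp0 : p ≠ 0) {s : Set (Fin n → K)}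
    (hs : s.Nonempty) (hdim : Module.finrank K (vectorSpan K s) + 1 = n)
    (hps : Set.EqOn (dehomogenize p) 0 s) (hqs : Set.EqOn (dehomogenize q) 0 s) :
    ∃ c : K, c • p = q := by
  obtain ⟨f, hf⟩ := exists_affineMap_coe_eq_dehomogenize hp
  obtain ⟨g, hg⟩ := exists_affineMap_coe_eq_dehomogenize hq
  have hf0 : f ≠ 0 := by
    rintro rfl
    refine hp0 (injOn_dehomogenize_isHomogeneous_one hp (isHomogeneous_zero _ _ _) ?_)
    rw [← hf, map_zero, AffineMap.coe_zero]
  obtain ⟨c, hc⟩ := exists_smul_eq_of_eqOn_zero hs (by rwa [Module.finrank_fin_fun]) hf0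
    (hf ▸ hps) (hg ▸ hqs)
  refine ⟨c, injOn_dehomogenize_isHomogeneous_one
    ((homogeneousSubmodule _ _ 1).smul_mem c hp) hq ?_⟩
  rw [map_smul, ← hf, ← hg, ← hc, AffineMap.coe_smul]

end LinearForms

lemma facetOf_eq_nonnegFacet {n d : ℕ} (ℓ : Fin d → MvPolynomial (Fin (n + 1)) ℝ) (i : Fin d) :
    facetOf ℓ i = nonnegFacet (fun m => dehomogenize (ℓ m)) i := rfl

theorem facet_forms_three_linearly_independent_general {K ι : Type*} [Field K] [LinearOrder K]
    [IsStrictOrderedRing K] {n : ℕ} (ℓ : ι → MvPolynomial (Fin (n + 1)) K)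
    (hhom : ∀ i, (ℓ i).IsHomogeneous 1) (hprop : ∀ i j, i ≠ j → ∀ c : K, c • ℓ i ≠ ℓ j)
    (hne : ∀ i, (nonnegFacet (fun m => dehomogenize (ℓ m)) i).Nonempty)
    (hdim : ∀ i, Module.finrank K
      (vectorSpan K (nonnegFacet (fun m => dehomogenize (ℓ m)) i)) + 1 = n)
    {i j k : ι} (hij : i ≠ j) (hik : i ≠ k) (hjk : j ≠ k) :
    LinearIndependent K ![ℓ i, ℓ j, ℓ k] := by
  have hnonvanishing : ∀ i k, i ≠ k →
      ∃ y ∈ nonnegFacet (fun m => dehomogenize (ℓ m)) k, dehomogenize (ℓ i) y ≠ 0 := by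
    intro i k hik
    by_contra! hvanish
    have hk0 : ℓ k ≠ 0 := fun h => hprop i k hik 0 (by rw [zero_smul, h])
    obtain ⟨c, hc⟩ := exists_smul_eq_of_dehomogenize_eqOn_zero (hhom k) (hhom i) hk0
      (hne k) (hdim k) (fun _ hy => hy.2) hvanish
    exact hprop k i hik.symm c hc
  refine LinearIndependent.of_comp dehomogenize ?_
  rw [← FinVec.map_eq]
  exact linearIndependent_three_of_nonnegFacet (f := fun m => dehomogenize (ℓ m))
    hnonvanishing hij hik hjk

/-- No three facet hyperplanes of a full-dimensional convex polytope meet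
in a common codimension-2 projective linear subspace: for pairwise distinct indices
`i, j, k`, the linear forms `ℓᵢ, ℓⱼ, ℓ_k` are linearly independent over `ℝ`. -/
theorem facet_forms_three_linearly_independent {n d : ℕ}
    (ℓ : Fin d → MvPolynomial (Fin (n + 1)) ℝ) (hP : IsPolytopeSetup ℓ)
    (i j k : Fin d) (hij : i ≠ j) (hik : i ≠ k) (hjk : j ≠ k) :
    LinearIndependent ℝ ![ℓ i, ℓ j, ℓ k] :=
  facet_forms_three_linearly_independent_general ℓ hP.hhom hP.hprop hP.hfacet_ne
    (fun m => by rw [← facetOf_eq_nonnegFacet, ← direction_affineSpan, hP.hfacet m,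
      Nat.sub_add_cancel hP.hn]) hij hik hjk

end
end
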